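/- (Optimal balanced supersaturation) Let k ≥ 4 be an integer, let ε > 0, and let H be a 2-contractible ℓ-overlapping k-tree with t edges and cross-cut number σ = σ(H). Then there exist constants c = c(ε,H) > 0 and c' = c'(ε,H) > 0 such that for all sufficiently large n the following holds: if F is a k-graph on [n] with |F| = a·C(n,k−1) where a ≥ σ − 1 + ε, then there exists a collection K of copies of H in F such that |K| ≥ c'·a·n^{k−1}·(a·n^{k−ℓ−1})^{t−1} and for all 1 ≤ b ≤ t, Δ_b(K) ≤ c·τ^{b−1}·|K|/|F|, where τ := 1/(a·n^{k−ℓ−1}). -/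

import Mathlib

open Finset Filter

attribute [local instance] Classical.propDecidable

/-- The vertex set `[n] = {1,…,n}`. -/
def vtx (n : ℕ) : Finset ℕ := Finset.Icc 1 n

/-- `F` is a `k`-graph on `[n]`: a family of `k`-element subsets of `[n]`. -/
def IsKGraphOn (k n : ℕ) (F : Finset (Finset ℕ)) : Prop :=
  ∀ E ∈ F, E ⊆ vtx n ∧ E.card = k

/-- The vertex set of a hypergraph (union of its edges). -/
def vertexSet {α : Type} [DecidableEq α] (H : Finset (Finset α)) : Finset α := H.sup id

/-- The degree of a vertex: the number of edges containing it. -/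
def vdeg {α : Type} [DecidableEq α] (H : Finset (Finset α)) (v : α) : ℕ :=
  (H.filter fun E => v ∈ E).card

/-- Hypertrees, defined recursively: a single edge is a hypertree, and a hypertree grows
by adding a new leaf edge `E` whose intersection with the current vertex set equals its
intersection with some existing (parent) edge `F`. -/
inductive IsHypertree {α : Type} [DecidableEq α] : Finset (Finset α) → Prop
  | single (E : Finset α) : IsHypertree {E}
  | grow {H : Finset (Finset α)} (E F : Finset α) (hH : IsHypertree H) (hE : E ∉ H)
      (hF : F ∈ H) (hint : E ∩ vertexSet H = E ∩ F) : IsHypertree (insert E H)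

/-- A `k`-tree: a `k`-uniform hypertree. -/
def IsKTree {α : Type} [DecidableEq α] (k : ℕ) (H : Finset (Finset α)) : Prop :=
  IsHypertree H ∧ ∀ E ∈ H, E.card = k

/-- A hypergraph is 2-contractible if every edge contains at least two vertices of degree 1. -/
def TwoContractible {α : Type} [DecidableEq α] (H : Finset (Finset α)) : Prop :=
  ∀ E ∈ H, 2 ≤ (E.filter fun v => vdeg H v = 1).card

/-- `S` is a cross-cut of `H`: every edge meets `S` in exactly one vertex. -/
def IsCrosscut {α : Type} [DecidableEq α] (H : Finset (Finset α)) (S : Finset α) : Prop :=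
  ∀ E ∈ H, (E ∩ S).card = 1

/-- `σ` is the cross-cut number of `H`: the minimum size of a cross-cut. -/
def IsCrosscutNumber {α : Type} [DecidableEq α] (H : Finset (Finset α)) (σ : ℕ) : Prop :=
  IsLeast {m | ∃ S : Finset α, IsCrosscut H S ∧ S.card = m} σ

/-- A hypergraph is `ℓ`-overlapping if any two distinct edges meet in at most `ℓ` vertices. -/
def Overlapping {α : Type} [DecidableEq α] (ℓ : ℕ) (H : Finset (Finset α)) : Prop :=
  ∀ E ∈ H, ∀ F ∈ H, E ≠ F → (E ∩ F).card ≤ ℓ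

/-- `K` is (the edge set of) a copy of `H`, i.e. the image of `H` under a map that is
injective on the vertex set of `H`. -/
def IsCopyOf {α : Type} [DecidableEq α] (H : Finset (Finset α)) (K : Finset (Finset ℕ)) : Prop :=
  ∃ φ : α → ℕ, Set.InjOn φ ↑(vertexSet H) ∧ K = H.image fun E => E.image φ

/-- `F` contains no subgraph isomorphic to `H`. -/
def HFree {α : Type} [DecidableEq α] (H : Finset (Finset α)) (F : Finset (Finset ℕ)) : Prop :=
  ∀ K ⊆ F, ¬ IsCopyOf H K

/-- The collection of copies of `H` in `F` (as distinct subgraphs of `F`). -/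
noncomputable def copies {α : Type} [DecidableEq α] (H : Finset (Finset α))
    (F : Finset (Finset ℕ)) : Finset (Finset (Finset ℕ)) :=
  F.powerset.filter (IsCopyOf H)

/-- The number of `H`-free `k`-graphs on the vertex set `[n]`. -/
noncomputable def forb {α : Type} [DecidableEq α] (n k : ℕ) (H : Finset (Finset α)) : ℕ :=
  (((vtx n).powersetCard k).powerset.filter (HFree H)).card

/-- `H` is a `k`-uniform linear cycle of length `ℓ`. -/
def IsLinearCycle {α : Type} [DecidableEq α] (k ℓ : ℕ) (H : Finset (Finset α)) : Prop :=
  ∃ E : ℕ → Finset α,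
    (∀ i < ℓ, (E i).card = k) ∧
    (∀ i < ℓ, ∀ j < ℓ, i ≠ j → E i ≠ E j) ∧
    (∀ i < ℓ, (E i ∩ E ((i + 1) % ℓ)).card = 1) ∧
    (∀ i < ℓ, ∀ j < ℓ, i ≠ j → E i ∩ E ((i + 1) % ℓ) ≠ E j ∩ E ((j + 1) % ℓ)) ∧
    (∀ i < ℓ, ∀ j < ℓ, i ≠ j → (i + 1) % ℓ ≠ j → (j + 1) % ℓ ≠ i → Disjoint (E i) (E j)) ∧
    H = (Finset.range ℓ).image E

/-- `(X 0, …, X (k-1))` is a `k`-partition of `F`. -/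
def IsKPartition (k : ℕ) (F : Finset (Finset ℕ)) (X : Fin k → Finset ℕ) : Prop :=
  (∀ i j, i ≠ j → Disjoint (X i) (X j)) ∧ ∀ E ∈ F, ∀ i, (E ∩ X i).card = 1

/-- The `J`-projection of an edge. -/
def projJ {k : ℕ} (X : Fin k → Finset ℕ) (J : Finset (Fin k)) (E : Finset ℕ) : Finset ℕ :=
  E ∩ J.sup X

/-- The pattern of a vertex set. -/
def pattern {k : ℕ} (X : Fin k → Finset ℕ) (D : Finset ℕ) : Finset (Fin k) :=
  Finset.univ.filter fun i => (D ∩ X i).Nonempty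

/-- `MI(F)`: the patterns of intersections of pairs of distinct edges. -/
noncomputable def MI {k : ℕ} (F : Finset (Finset ℕ)) (X : Fin k → Finset ℕ) :
    Finset (Finset (Fin k)) :=
  ((F ×ˢ F).filter fun p => p.1 ≠ p.2).image fun p => pattern X (p.1 ∩ p.2)

/-- The link of a vertex set `D` in `F`. -/
def link {α : Type} [DecidableEq α] (F : Finset (Finset α)) (D : Finset α) :
    Finset (Finset α) :=
  (F.filter fun E => D ⊆ E).image fun E => E \ D

/-- The degree of a vertex set `D` in `F`: the size of its link. -/
def setDeg {α : Type} [DecidableEq α] (F : Finset (Finset α)) (D : Finset α) : ℕ :=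
  (link F D).card

/-- A nonempty hypergraph is `s`-diverse if every vertex has degree less than `|H|/s`. -/
def SDiverse {α : Type} [DecidableEq α] (s : ℕ) (H : Finset (Finset α)) : Prop :=
  H.Nonempty ∧ ∀ v : α, s * vdeg H v < H.card

/-- `D` is `s`-strong in `F` if its link is `s`-diverse. -/
def SStrong {α : Type} [DecidableEq α] (s : ℕ) (F : Finset (Finset α)) (D : Finset α) : Prop :=
  SDiverse s (link F D)

/-- `F`, with `k`-partition `X`, is `s`-super-homogeneous: for every `J ∈ MI(F)` and every
edge `E ∈ F`, the projection `E_J` is `s`-strong and `d_F(E_J) ≥ max{s, |F|/(2k·n^|J|)}`. -/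
def SuperHomogeneous (n k s : ℕ) (F : Finset (Finset ℕ)) (X : Fin k → Finset ℕ) : Prop :=
  ∀ J ∈ MI F X, ∀ E ∈ F,
    SStrong s F (projJ X J E) ∧
    s ≤ setDeg F (projJ X J E) ∧
    (F.card : ℝ) / (2 * k * (n : ℝ) ^ J.card) ≤ (setDeg F (projJ X J E) : ℝ)

/-- The rank of a family of subsets of `[k]`: the minimum size of a set `D ⊆ [k]` contained
in no member of the family. -/
noncomputable def rankFam (k : ℕ) (𝒥 : Finset (Finset (Fin k))) : ℕ :=
  sInf {d | ∃ D : Finset (Fin k), D.card = d ∧ ∀ J ∈ 𝒥, ¬ D ⊆ J}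

/-- A family of subsets of `[k]` is of type 1 if it contains the full power set of some
`(k-2)`-set `B`. -/
def TypeOne (k : ℕ) (𝒥 : Finset (Finset (Fin k))) : Prop :=
  ∃ B : Finset (Fin k), B.card = k - 2 ∧ ∀ S ⊆ B, S ∈ 𝒥

/-- The constant `c(k,s) = k!/(k^k·(2s(1+2^k))^(2^k))`. -/
noncomputable def cks (k s : ℕ) : ℝ :=
  (Nat.factorial k : ℝ) / ((k : ℝ) ^ k * (2 * (s : ℝ) * (1 + 2 ^ k)) ^ (2 ^ k))

/-- Degree of a set of vertices in a (uniform) hypergraph `K`: number of edges containing it. -/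
def uDeg {α : Type} [DecidableEq α] (K : Finset (Finset α)) (S : Finset α) : ℕ :=
  (K.filter fun e => S ⊆ e).card

/-- A `t`-uniform hypergraph is `d`-graded if `d_K(S) ≤ d^(t-|S|)` for all `S` with
`1 ≤ |S| ≤ t`. -/
def Graded {α : Type} [DecidableEq α] (t : ℕ) (d : ℝ) (K : Finset (Finset α)) : Prop :=
  ∀ S : Finset α, 1 ≤ S.card → S.card ≤ t → (uDeg K S : ℝ) ≤ d ^ (t - S.card)

/-- `S` is saturated by `K`: `d_K(S) = ⌊d^(t-|S|)⌋`. -/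
def Saturated {α : Type} [DecidableEq α] (t : ℕ) (d : ℝ) (K : Finset (Finset α))
    (S : Finset α) : Prop :=
  uDeg K S = ⌊d ^ (t - S.card)⌋₊

/-- `S` is admissible: no nonempty subset of `S` is saturated. -/
def Admissible {α : Type} [DecidableEq α] (t : ℕ) (d : ℝ) (K : Finset (Finset α))
    (S : Finset α) : Prop :=
  ∀ S' ⊆ S, S'.Nonempty → ¬ Saturated t d K S'

/-- `Z_K(S)`: the vertices `v` such that `S ∪ {v}` is inadmissible and `{v}` is not
saturated. -/
noncomputable def Zset {α : Type} [DecidableEq α] (t : ℕ) (d : ℝ) (K : Finset (Finset α))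
    (S : Finset α) : Finset α :=
  (vertexSet K).filter fun v => ¬ Admissible t d K (insert v S) ∧ ¬ Saturated t d K {v}

/-- `ex(G,H)`: the maximum number of edges of an `H`-free subgraph of `G`. -/
noncomputable def exIn {α : Type} [DecidableEq α] (H : Finset (Finset α))
    (G : Finset (Finset ℕ)) : ℕ :=
  (G.powerset.filter (HFree H)).sup Finset.card

/-- The probability, in the random `k`-graph `G^(k)(n,p)` (each `k`-subset of `[n]` is an
edge independently with probability `p`), of the event `A`. -/
noncomputable def probEvent (k n : ℕ) (p : ℝ) (A : Finset (Finset ℕ) → Prop) : ℝ :=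
  ∑ G ∈ ((vtx n).powersetCard k).powerset.filter A,
    p ^ G.card * (1 - p) ^ (((vtx n).powersetCard k).card - G.card)

/-!
Let `K` be a maximal `d`-graded family of copies of `H` in `F`, where `d` is a small multiple of
`a·n^{k-ℓ-1}`. Gradedness bounds every `Δ_b(K)` as soon as `|K|` is at least a constant times
`|F|·d^{t-1}`. If `K` were smaller than that, only a few edges of `F` could be saturated, and
discarding them keeps the average above `σ - 1 + ε/2`. An admissible set of fewer than `t` edges has
only `O(d)` extensions by one edge that are not admissible, so `H` embeds into the remaining edges
with an admissible image, and this copy could have been added to `K`.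

The embedding rests on a dichotomy for `F` obtained from the delta-system method. Either part of `F`
is so rich over all sets of coordinates omitting two fixed ones that `H` embeds greedily, the
degree-1 vertices of each edge supplying the two free coordinates; or almost every edge `E` has a
vertex `x(E)` such that `E ↦ E ∖ {x(E)}` has bounded fibres. In the latter case average degree above
`σ - 1` yields many `(k-1)`-sets lying in `σ` edges each, and `H` is embedded with a cross-cut of
size `σ` mapped to the apexes.
-/

/-! ### Homogeneous subfamilies -/

section Homogeneous

variable {ι V : Type*}

theorem exists_hereditary_colouring {X C : Type*} [Nonempty C] {bad : Finset X → X → C → Prop}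
    (bad_anti : ∀ ⦃A B : Finset X⦄ (x : X) (c : C), A ⊆ B → bad B x c → bad A x c) (s : Finset X)
    (h : ∀ A ⊆ s, A.Nonempty → ∃ x ∈ A, ∃ c, bad A x c) :
    ∃ col : X → C, ∀ A ⊆ s, A.Nonempty → ∃ x ∈ A, bad A x (col x) := by
  induction s using Finset.strongInduction with
  | H s ih =>
    rcases s.eq_empty_or_nonempty with rfl | hs
    · exact ⟨fun _ => Classical.arbitrary C, fun A hA hne => absurd (hne.mono hA) (by simp)⟩
    obtain ⟨x, hx, c, hc⟩ := h s Subset.rfl hs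
    obtain ⟨col, hcol⟩ := ih (s.erase x) (erase_ssubset hx)
      fun A hA => h A (hA.trans (erase_subset _ _))
    refine ⟨Function.update col x c, fun A hA hne => ?_⟩
    by_cases hxA : x ∈ A
    · exact ⟨x, hxA, by simpa using bad_anti x c hA hc⟩
    · obtain ⟨y, hy, hbad⟩ := hcol A (subset_erase.2 ⟨hA, hxA⟩) hne
      exact ⟨y, hy, by rwa [Function.update_of_ne (ne_of_mem_of_not_mem hy hxA)]⟩

theorem exists_card_le_card_mul_fiber {X C : Type*} [Fintype C] [DecidableEq C] [Nonempty C]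
    (s : Finset X) (f : X → C) : ∃ c, #s ≤ Fintype.card C * #{x ∈ s | f x = c} := by
  obtain ⟨c, -, hc⟩ := exists_max_image univ (fun c => #{x ∈ s | f x = c}) univ_nonempty
  refine ⟨c, ?_⟩
  rw [card_eq_sum_card_fiberwise fun x _ => mem_coe.2 (mem_univ (f x))]
  exact sum_le_card_nsmul univ _ _ hc

/-- The tuples in `A` that agree with `e` on `J` and avoid `W` outside `J`. -/
noncomputable def extensions (A : Finset (ι → V)) (J : Finset ι) (W : Finset V) (e : ι → V) :
    Finset (ι → V) :=
  {e' ∈ A | Set.EqOn e' e J ∧ ∀ i ∉ J, e' i ∉ W}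

/-- Every tuple in `A` has at least `L` extensions from `J` inside `A`, even after any `w` values
are forbidden outside `J`. -/
def IsRich (w : ℕ) (L : ℝ) (A : Finset (ι → V)) (J : Finset ι) : Prop :=
  ∀ e ∈ A, ∀ W : Finset V, #W ≤ w → L ≤ #(extensions A J W e)

/-- On `A`, the coordinates in `J` determine some coordinate outside `J`. -/
def ForcesCoordinate (A : Finset (ι → V)) (J : Finset ι) : Prop :=
  ∃ i ∉ J, ∀ e ∈ A, ∀ e' ∈ A, Set.EqOn e e' J → e i = e' i

variable {w w' : ℕ} {L L' : ℝ} {A B : Finset (ι → V)} {J : Finset ι} {S : Finset V}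

theorem mem_extensions {W : Finset V} {e e' : ι → V} :
    e' ∈ extensions A J W e ↔ e' ∈ A ∧ Set.EqOn e' e J ∧ ∀ i ∉ J, e' i ∉ W :=
  mem_filter

theorem extensions_mono (hAB : A ⊆ B) (W : Finset V) (e : ι → V) :
    extensions A J W e ⊆ extensions B J W e :=
  filter_subset_filter _ hAB

theorem IsRich.mono (h : IsRich w L A J) (hw : w' ≤ w) (hL : L' ≤ L) : IsRich w' L' A J :=
  fun e he W hW => hL.trans (h e he W (hW.trans hw))

theorem ForcesCoordinate.mono (h : ForcesCoordinate B J) (hAB : A ⊆ B) : ForcesCoordinate A J :=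
  let ⟨i, hi, h⟩ := h
  ⟨i, hi, fun e he e' he' => h e (hAB he) e' (hAB he')⟩

theorem restrict_eq_restrict_iff_eqOn {e e' : ι → V} :
    J.restrict e = J.restrict e' ↔ Set.EqOn e e' J := by
  simp [funext_iff, Set.EqOn]

theorem card_image_restrict_le (hA : ∀ e ∈ A, ∀ i, e i ∈ S) (J : Finset ι) :
    #(A.image J.restrict) ≤ #S ^ #J := by
  have hsub : A.image J.restrict ⊆ Fintype.piFinset fun _ : J => S := by
    intro x hx
    obtain ⟨e, he, rfl⟩ := mem_image.1 hx
    exact Fintype.mem_piFinset.2 fun i => hA e he i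
  simpa using card_le_card hsub

theorem exists_hit_subset_of_hereditary {𝒲 : Set (Finset V)} (h𝒲 : ∅ ∈ 𝒲)
    (hA : ∀ e ∈ A, ∀ i, e i ∈ S) (hL : 0 ≤ L)
    (h : ∀ B ⊆ A, B.Nonempty → ∃ e ∈ B, ∃ W ∈ 𝒲, #(extensions B J W e) ≤ L) :
    ∃ W : (J → V) → Finset V, (∀ x, W x ∈ 𝒲) ∧ ∃ B ⊆ A, #A - (#S : ℝ) ^ #J * L ≤ #B ∧
      ∀ e ∈ B, ∃ i ∉ J, e i ∈ W (J.restrict e) := by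
  have hfiber (x : J → V) : ∃ W ∈ 𝒲,
      (#{e ∈ A | J.restrict e = x ∧ ∀ i ∉ J, e i ∉ W} : ℝ) ≤ L := by
    rcases (A.filter fun e => J.restrict e = x).eq_empty_or_nonempty with hx | hx
    · refine ⟨∅, h𝒲, ?_⟩
      rwa [← filter_filter, hx, filter_empty, card_empty, Nat.cast_zero]
    · obtain ⟨e, he, W, hW, hle⟩ := h _ (filter_subset _ _) hx
      refine ⟨W, hW, hle.trans' (mod_cast card_le_card fun e' he' => ?_)⟩
      simp only [mem_extensions, mem_filter] at he he' ⊢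
      exact ⟨⟨he'.1, he'.2.1⟩, restrict_eq_restrict_iff_eqOn.1 (he'.2.1.trans he.2.symm), he'.2.2⟩
  choose W hW𝒲 hWL using hfiber
  set A₀ := A.filter fun e => ∀ i ∉ J, e i ∉ W (J.restrict e)
  have hA₀A : A₀ ⊆ A := filter_subset _ _
  have himage : #(A₀.image J.restrict) ≤ #S ^ #J :=
    card_image_restrict_le (fun e he => hA e (hA₀A he)) J
  have hA₀ : (#A₀ : ℝ) ≤ (#S : ℝ) ^ #J * L :=
    calc (#A₀ : ℝ) = ∑ x ∈ A₀.image J.restrict, (#{e ∈ A₀ | J.restrict e = x} : ℝ) := by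
          exact_mod_cast card_eq_sum_card_image J.restrict A₀
      _ ≤ ∑ _x ∈ A₀.image J.restrict, L := by
          refine sum_le_sum fun x _ => (hWL x).trans' (mod_cast card_le_card fun e he => ?_)
          simp only [A₀, mem_filter] at he ⊢
          exact ⟨he.1.1, he.2, he.2 ▸ he.1.2⟩
      _ = #(A₀.image J.restrict) * L := by rw [sum_const, nsmul_eq_mul]
      _ ≤ (#S : ℝ) ^ #J * L := by gcongr; exact_mod_cast himage
  refine ⟨W, hW𝒲, A \ A₀, sdiff_subset, ?_, fun e he => ?_⟩
  · rw [cast_card_sdiff hA₀A]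
    exact sub_le_sub_left hA₀ _
  · obtain ⟨heA, heA₀⟩ := mem_sdiff.1 he
    by_contra! hmiss
    exact heA₀ (mem_filter.2 ⟨heA, hmiss⟩)

theorem exists_forcesCoordinate_subset [Fintype ι] (hA : A.Nonempty) {W : (J → V) → Finset V}
    (hW : ∀ x, #(W x) ≤ w) (h : ∀ e ∈ A, ∃ i ∉ J, e i ∈ W (J.restrict e)) :
    ∃ B ⊆ A, #A ≤ Fintype.card ι * w * #B ∧ ForcesCoordinate B J := by
  obtain ⟨e₀, he₀⟩ := hA
  obtain ⟨i₀, -, hi₀⟩ := h e₀ he₀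
  have : NeZero w := ⟨(card_pos.2 ⟨_, hi₀⟩ |>.trans_le (hW _)).ne'⟩
  have : Nonempty ι := ⟨i₀⟩
  have hlabel (x : J → V) : ∃ f : V → Fin w, Set.InjOn f (W x) := by
    obtain ⟨f, -, hf⟩ := (W x).finite_toSet.exists_injOn_of_encard_le
      (t := (Set.univ : Set (Fin w)))
      (by simpa [Set.encard_univ] using hW x)
    exact ⟨f, hf⟩
  choose label hlabel using hlabel
  choose! i hiJ hiW using h
  obtain ⟨c, hc⟩ := exists_card_le_card_mul_fiber A
    fun e => (i e, label (J.restrict e) (e (i e)))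
  have hB : {e ∈ A | (i e, label (J.restrict e) (e (i e))) = c}.Nonempty := by
    by_contra hB
    rw [not_nonempty_iff_eq_empty.1 hB, card_empty, mul_zero] at hc
    exact (card_pos.2 ⟨e₀, he₀⟩).not_ge hc
  refine ⟨_, filter_subset _ _, by simpa using hc, c.1, ?_, fun e he e' he' hee' => ?_⟩
  · obtain ⟨e, he⟩ := hB
    obtain ⟨heA, rfl⟩ := mem_filter.1 he
    exact hiJ e heA
  · obtain ⟨heA, rfl⟩ := mem_filter.1 he
    obtain ⟨he'A, hcol⟩ := mem_filter.1 he'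
    obtain ⟨hi, hl⟩ := Prod.mk.inj hcol
    have hr := restrict_eq_restrict_iff_eqOn.2 hee'
    have he'W := hiW e' he'A
    rw [hi, ← hr] at hl he'W
    exact (hlabel _ he'W (hiW e heA) hl).symm

theorem exists_isRich_or_forcesCoordinate [Fintype ι] (hA : ∀ e ∈ A, ∀ i, e i ∈ S)
    (w : Finset ι → ℕ) {L : Finset ι → ℝ} (hL : ∀ J, 0 ≤ L J) {D : ℝ}
    (hLD : ∀ J : Finset ι, (#S : ℝ) ^ #J * L J ≤ D) (hD : 2 ^ Fintype.card ι * D < #A) :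
    (∃ B ⊆ A, B.Nonempty ∧ ∀ J, IsRich (w J) (L J) B J) ∨
      ∃ J, ∃ B ⊆ A, #A / 2 ^ Fintype.card ι - D ≤ Fintype.card ι * w J * #B ∧
        ForcesCoordinate B J := by
  refine or_iff_not_imp_left.2 fun hpoor => ?_
  have hbad : ∀ B ⊆ A, B.Nonempty → ∃ e ∈ B, ∃ J, ∃ W : Finset V,
      #W ≤ w J ∧ #(extensions B J W e) ≤ L J := by
    by_contra! ⟨B, hBA, hB, hrich⟩
    exact hpoor ⟨B, hBA, hB, fun J e he W hW => (hrich e he J W hW).le⟩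
  obtain ⟨col, hcol⟩ := exists_hereditary_colouring
    (fun B C e J hBC ⟨W, hW, hle⟩ =>
      ⟨W, hW, hle.trans' (mod_cast card_le_card (extensions_mono hBC W e))⟩) A hbad
  obtain ⟨J, hJ⟩ := exists_card_le_card_mul_fiber A col
  set R := A.filter fun e => col e = J
  have hRA : R ⊆ A := filter_subset _ _
  obtain ⟨W, hWw, R', hR', hcard, hhit⟩ := exists_hit_subset_of_hereditary (A := R) (J := J)
    (L := L J) (𝒲 := {W | #W ≤ w J}) (by simp) (fun e he => hA e (hRA he)) (hL J)
    fun B hB hne => by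
      obtain ⟨e, he, h⟩ := hcol B (hB.trans hRA) hne
      exact ⟨e, he, (mem_filter.1 (hB he)).2 ▸ h⟩
  have hlarge : #A / 2 ^ Fintype.card ι - D ≤ #R' := by
    have hAR : (#A : ℝ) / 2 ^ Fintype.card ι ≤ #R := by
      rw [div_le_iff₀' (by positivity)]
      simpa using (Nat.cast_le (α := ℝ)).2 hJ
    linarith [hLD J]
  have hpos : 0 < #A / 2 ^ Fintype.card ι - D := by
    rw [sub_pos, lt_div_iff₀' (by positivity)]
    exact hD
  obtain ⟨B, hB, hcardB, hforce⟩ := exists_forcesCoordinate_subset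
    (card_pos.1 (mod_cast hpos.trans_le hlarge)) hWw hhit
  exact ⟨J, B, hB.trans (hR'.trans hRA), hlarge.trans (mod_cast hcardB), hforce⟩

/-- `A` is regularised at scale `M`: all partial tuples have many extensions, and for each `J`
either this is robust under forbidding `w` values or `J` determines a further coordinate. -/
structure IsHomogeneousFamily (w : ℕ) (M : ℝ) (S : Finset V) (A : Finset (ι → V)) : Prop where
  isRich_zero : ∀ J, IsRich 0 (M / (#S : ℝ) ^ #J) A J
  isRich_or_forcesCoordinate : ∀ J, IsRich w (M / (#S : ℝ) ^ #J) A J ∨ ForcesCoordinate A J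

theorem IsHomogeneousFamily.mono {M M' : ℝ} (h : IsHomogeneousFamily w M S A) (hM : M' ≤ M) :
    IsHomogeneousFamily w M' S A := by
  have hle (J : Finset ι) : M' / (#S : ℝ) ^ #J ≤ M / (#S : ℝ) ^ #J := by gcongr
  exact ⟨fun J => (h.isRich_zero J).mono le_rfl (hle J),
    fun J => (h.isRich_or_forcesCoordinate J).imp_left fun hJ => hJ.mono le_rfl (hle J)⟩

theorem exists_isHomogeneousFamily_subset_of_card_not_forces_lt [Fintype ι] (w m : ℕ) {θ : ℝ}
    (hθ : 0 < θ) :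
    ∃ δ > 0, ∀ (S : Finset V) (A : Finset (ι → V)) (M : ℝ), 0 < M →
      (∀ e ∈ A, ∀ i, e i ∈ S) → θ * M ≤ #A → #{J | ¬ForcesCoordinate A J} < m →
      ∃ B ⊆ A, B.Nonempty ∧ IsHomogeneousFamily w (δ * M) S B := by
  induction m generalizing θ with
  | zero => exact ⟨1, one_pos, by simp⟩
  | succ m ih =>
    set δ := θ / 2 / 2 ^ Fintype.card ι
    have hδ : 0 < δ := by positivity
    have hδθ : 2 ^ Fintype.card ι * δ = θ / 2 := mul_div_cancel₀ _ (by positivity)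
    obtain ⟨δ', hδ', hrec⟩ := ih (θ := δ / (Fintype.card ι * w + 1)) (by positivity)
    refine ⟨min δ δ', lt_min hδ hδ', fun S A M hM hA hcard hm => ?_⟩
    have hstep := exists_isRich_or_forcesCoordinate hA
      (fun J => if ForcesCoordinate A J then 0 else w)
      (L := fun J => δ * M / (#S : ℝ) ^ #J) (fun J => by positivity) (D := δ * M)
      (fun J => by
        rw [mul_div_left_comm]
        exact mul_le_of_le_one_right (by positivity) (div_self_le_one _)) (by
        rw [← mul_assoc, hδθ]
        linarith [mul_pos hθ hM])
    rcases hstep with ⟨B, hBA, hB, hrich⟩ | ⟨J, B, hBA, hBcard, hforce⟩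
    · have hBhom : IsHomogeneousFamily w (δ * M) S B :=
        ⟨fun J => (hrich J).mono (Nat.zero_le _) le_rfl, fun J => by
          by_cases hJ : ForcesCoordinate A J
          · exact .inr (hJ.mono hBA)
          · exact .inl (by simpa [hJ] using hrich J)⟩
      exact ⟨B, hBA, hB, hBhom.mono (by gcongr; exact min_le_left _ _)⟩
    · have hgain : δ * M ≤ #A / 2 ^ Fintype.card ι - δ * M := by
        rw [le_sub_iff_add_le, le_div_iff₀' (by positivity), mul_add, ← mul_assoc, hδθ]
        linarith
      have hJ : ¬ForcesCoordinate A J := fun hJ => by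
        simp only [hJ, if_true, Nat.cast_zero, mul_zero, zero_mul] at hBcard
        linarith [mul_pos hδ hM]
      have hfewer : #{J | ¬ForcesCoordinate B J} < m := by
        refine (card_lt_card (ssubset_iff_of_subset ?_ |>.2 ⟨J, ?_, ?_⟩)).trans_le
          (Nat.lt_succ_iff.1 hm)
        · exact monotone_filter_right _ fun J' _ hJ' hJ'A => hJ' (hJ'A.mono hBA)
        · simpa using hJ
        · simpa using hforce
      obtain ⟨B', hB'B, hB', hhom⟩ := hrec S B M hM (fun e he => hA e (hBA he)) (by
        rw [if_neg hJ] at hBcard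
        rw [div_mul_eq_mul_div, div_le_iff₀' (by positivity)]
        linarith [(#B).cast_nonneg (α := ℝ)]) hfewer
      exact ⟨B', hB'B.trans hBA, hB', hhom.mono (by gcongr; exact min_le_right _ _)⟩

theorem exists_isHomogeneousFamily_subset [Finite ι] (w : ℕ) {θ : ℝ} (hθ : 0 < θ) :
    ∃ δ > 0, ∀ (S : Finset V) (A : Finset (ι → V)) (M : ℝ), 0 < M →
      (∀ e ∈ A, ∀ i, e i ∈ S) → θ * M ≤ #A →
      ∃ B ⊆ A, B.Nonempty ∧ IsHomogeneousFamily w (δ * M) S B := by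
  cases nonempty_fintype ι
  obtain ⟨δ, hδ, h⟩ := exists_isHomogeneousFamily_subset_of_card_not_forces_lt (ι := ι) (V := V) w
    (#(univ : Finset (Finset ι)) + 1) hθ
  exact ⟨δ, hδ, fun S A M hM hA hcard =>
    h S A M hM hA hcard (Nat.lt_succ_iff.2 (card_le_card (filter_subset _ _)))⟩

theorem IsRich.exists_ne (h : IsRich w L A J) (hw : 1 ≤ w) (hL : 0 < L) {e : ι → V} (he : e ∈ A)
    {i : ι} (hi : i ∉ J) : ∃ e' ∈ A, Set.EqOn e' e J ∧ e' i ≠ e i := by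
  have hpos : 0 < #(extensions A J {e i} e) := mod_cast hL.trans_le (h e he {e i} (by simpa))
  obtain ⟨e', he'⟩ := card_pos.1 hpos
  obtain ⟨he'A, heq, hne⟩ := mem_extensions.1 he'
  exact ⟨e', he'A, heq, by simpa using hne i hi⟩

theorem IsHomogeneousFamily.isRich_inter {M : ℝ} (h : IsHomogeneousFamily w M S A) (hM : 0 < M)
    (hw : 1 ≤ w) (hS : S.Nonempty) (hA : A.Nonempty) {J₁ J₂ : Finset ι}
    (h₁ : IsRich w (M / (#S : ℝ) ^ #J₁) A J₁) (h₂ : IsRich w (M / (#S : ℝ) ^ #J₂) A J₂) :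
    IsRich w (M / (#S : ℝ) ^ #(J₁ ∩ J₂)) A (J₁ ∩ J₂) := by
  refine (h.isRich_or_forcesCoordinate _).resolve_right fun ⟨i, hi, hforce⟩ => ?_
  obtain ⟨e, he⟩ := hA
  have hmem {J : Finset ι} (hJ : IsRich w (M / (#S : ℝ) ^ #J) A J) (hsub : J₁ ∩ J₂ ⊆ J) :
      i ∈ J := by
    by_contra hiJ
    obtain ⟨e', he', heq, hne⟩ := hJ.exists_ne hw (by positivity) he hiJ
    exact hne (hforce e' he' e he (heq.mono (coe_subset.2 hsub)))
  exact hi (mem_inter.2 ⟨hmem h₁ inter_subset_left, hmem h₂ inter_subset_right⟩)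

theorem IsHomogeneousFamily.exists_isRich_superset [Fintype ι] {M : ℝ}
    (h : IsHomogeneousFamily w M S A) (hA : A.Nonempty) (hJ : 1 < M / (#S : ℝ) ^ #J) :
    ∃ J', J ⊆ J' ∧ J' ≠ univ ∧ IsRich w (M / (#S : ℝ) ^ #J') A J' := by
  by_contra! hpoor
  have hdetermine : ∀ e ∈ A, ∀ e' ∈ A, Set.EqOn e e' J → e = e' := fun e he e' he' heq => by
    by_contra hne
    obtain ⟨i, hi, hforce⟩ := (h.isRich_or_forcesCoordinate {i | e i = e' i}).resolve_left
      (hpoor _ (fun i hi => by simpa using heq hi)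
        (by simpa [eq_univ_iff_forall, funext_iff] using hne))
    exact hi (by simpa using hforce e he e' he' fun i hi => by simpa using hi)
  obtain ⟨e, he⟩ := hA
  have hone : #(extensions A J ∅ e) ≤ 1 := card_le_one.2 fun e₁ h₁ e₂ h₂ => by
    rw [mem_extensions] at h₁ h₂
    exact hdetermine _ h₁.1 _ h₂.1 (h₁.2.1.trans h₂.2.1.symm)
  have := h.isRich_zero J e he ∅ (by simp)
  have : (#(extensions A J ∅ e) : ℝ) ≤ 1 := mod_cast hone
  linarith

theorem union_closed_dichotomy [Nontrivial ι] {𝒞 : Set (Finset ι)}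
    (hunion : ∀ C ∈ 𝒞, ∀ D ∈ 𝒞, C ∪ D ∈ 𝒞)
    (hpair : ∀ i j, i ≠ j → {i} ∈ 𝒞 ∨ {j} ∈ 𝒞 ∨ {i, j} ∈ 𝒞) :
    (∃ p q, p ≠ q ∧ ∀ R : Finset ι, p ∈ R → q ∈ R → R ∈ 𝒞) ∨
      ∃ x, {x} ∉ 𝒞 ∧ ∀ R : Finset ι, R.Nonempty → x ∉ R → R ∈ 𝒞 := by
  have hcover (R : Finset ι) (hR : R.Nonempty) (h : ∀ r ∈ R, ∃ C ∈ 𝒞, r ∈ C ∧ C ⊆ R) : R ∈ 𝒞 := by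
    choose! C hC𝒞 hrC hCR using h
    have hsup : R.sup' hR C = R :=
      (sup'_le hR C hCR).antisymm fun r hr => le_sup' C hr (hrC r hr)
    exact hsup ▸ sup'_mem 𝒞 hunion R hR C hC𝒞
  by_cases hsingle : ∀ i, {i} ∈ 𝒞
  · obtain ⟨p, q, hpq⟩ := exists_pair_ne ι
    exact .inl ⟨p, q, hpq, fun R hp _ => hcover R ⟨p, hp⟩ fun r hr =>
      ⟨{r}, hsingle r, mem_singleton_self r, singleton_subset_iff.2 hr⟩⟩
  push Not at hsingle
  obtain ⟨x, hx⟩ := hsingle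
  by_cases hp : ∃ p, p ≠ x ∧ {x, p} ∈ 𝒞
  · obtain ⟨p, hpx, hp𝒞⟩ := hp
    refine .inl ⟨p, x, hpx, fun R hpR hxR => hcover R ⟨p, hpR⟩ fun r hr => ?_⟩
    rcases eq_or_ne r x with rfl | hrx
    · exact ⟨{r, p}, hp𝒞, by simp, by simp [insert_subset_iff, hpR, hxR]⟩
    rcases hpair x r hrx.symm with h | h | h
    · exact absurd h hx
    · exact ⟨{r}, h, by simp, by simpa⟩
    · exact ⟨{x, r}, h, by simp, by simp [insert_subset_iff, hr, hxR]⟩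
  · push Not at hp
    refine .inr ⟨x, hx, fun R hR hxR => hcover R hR fun r hr => ?_⟩
    have hrx : r ≠ x := ne_of_mem_of_not_mem hr hxR
    have hr𝒞 : {r} ∈ 𝒞 := ((hpair x r hrx.symm).resolve_left hx).resolve_right (hp r hrx)
    exact ⟨{r}, hr𝒞, by simp, by simpa⟩

theorem IsHomogeneousFamily.type_one_or_type_two [Fintype ι] [Nontrivial ι] {M : ℝ}
    (h : IsHomogeneousFamily w M S A) (hw : 1 ≤ w) (hS : S.Nonempty) (hA : A.Nonempty)
    (hM : (#S : ℝ) ^ (Fintype.card ι - 2) < M) :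
    (∃ p q, p ≠ q ∧ ∀ J : Finset ι, p ∉ J → q ∉ J → IsRich w (M / (#S : ℝ) ^ #J) A J) ∨
      ∃ x, (∀ J : Finset ι, x ∈ J → J ≠ univ → IsRich w (M / (#S : ℝ) ^ #J) A J) ∧
        ∀ e ∈ A, ∀ e' ∈ A, (∀ i ≠ x, e i = e' i) → e = e' := by
  have hM₀ : 0 < M := hM.trans_le' (by positivity)
  set 𝒞 : Set (Finset ι) := {R | IsRich w (M / (#S : ℝ) ^ #Rᶜ) A Rᶜ}
  have hunion : ∀ C ∈ 𝒞, ∀ D ∈ 𝒞, C ∪ D ∈ 𝒞 := fun C hC D hD => by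
    simpa only [𝒞, Set.mem_ofPred_eq, compl_union] using h.isRich_inter hM₀ hw hS hA hC hD
  have hpair : ∀ i j, i ≠ j → {i} ∈ 𝒞 ∨ {j} ∈ 𝒞 ∨ {i, j} ∈ 𝒞 := fun i j hij => by
    have hcard : #({i, j}ᶜ : Finset ι) = Fintype.card ι - 2 := by
      rw [card_compl, card_pair hij]
    obtain ⟨J, hJ, hJu, hrich⟩ := h.exists_isRich_superset (J := {i, j}ᶜ) hA <| by
      rwa [hcard, one_lt_div (by positivity)]
    have hJ𝒞 : Jᶜ ∈ 𝒞 := by simpa only [𝒞, Set.mem_ofPred_eq, compl_compl] using hrich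
    have hJne : (Jᶜ : Finset ι).Nonempty := by rwa [nonempty_iff_ne_empty, Ne, compl_eq_empty_iff]
    have hJsub : ((Jᶜ : Finset ι) : Set ι) ⊆ {i, j} := by
      simpa only [coe_pair] using coe_subset.2 (compl_le_of_compl_le hJ : Jᶜ ⊆ {i, j})
    have hJeq : Jᶜ = {i} ∨ Jᶜ = {j} ∨ Jᶜ = {i, j} := by
      simpa only [← coe_inj, coe_singleton, coe_pair] using
        (coe_nonempty.2 hJne).subset_pair_iff_eq.1 hJsub
    rcases hJeq with h | h | h <;> simp only [← h, hJ𝒞, true_or, or_true]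
  have hrich {J : Finset ι} (hJ : Jᶜ ∈ 𝒞) : IsRich w (M / (#S : ℝ) ^ #J) A J := by
    simpa only [𝒞, Set.mem_ofPred_eq, compl_compl] using hJ
  refine (union_closed_dichotomy hunion hpair).imp ?_ ?_
  · rintro ⟨p, q, hpq, h𝒞⟩
    exact ⟨p, q, hpq, fun J hp hq => hrich (h𝒞 _ (mem_compl.2 hp) (mem_compl.2 hq))⟩
  · rintro ⟨x, hx, h𝒞⟩
    refine ⟨x, fun J hxJ hJ => hrich (h𝒞 _ ?_ (by simpa)), fun e he e' he' heq => ?_⟩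
    · rwa [nonempty_iff_ne_empty, Ne, compl_eq_empty_iff]
    · obtain ⟨i, hi, hforce⟩ := (h.isRich_or_forcesCoordinate {x}ᶜ).resolve_left hx
      obtain rfl : i = x := by simpa using hi
      funext j
      rcases eq_or_ne j i with rfl | hj
      · exact hforce e he e' he' fun k hk => heq k (by simpa using hk)
      · exact heq j hj

theorem IsHomogeneousFamily.le_card {M : ℝ} (h : IsHomogeneousFamily w M S A) (hA : A.Nonempty) :
    M ≤ #A := by
  obtain ⟨e, he⟩ := hA
  have := h.isRich_zero ∅ e he ∅ (by simp)
  simp only [card_empty, pow_zero, div_one] at this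
  exact this.trans (mod_cast card_le_card (filter_subset _ _))

theorem exists_type_one_or_type_two_subset [Fintype ι] [Nontrivial ι] (hw : 1 ≤ w) {θ κ : ℝ}
    (hθ : 0 < θ) (hκ : 0 < κ) :
    ∃ δ > 0, ∃ n₀ : ℕ, ∀ (S : Finset V) (A : Finset (ι → V)) (M : ℝ), n₀ ≤ #S →
      κ * (#S : ℝ) ^ (Fintype.card ι - 1) ≤ M → (∀ e ∈ A, ∀ i, e i ∈ S) → θ * M ≤ #A →
      ∃ B ⊆ A, B.Nonempty ∧ δ * M ≤ #B ∧
        ((∃ p q, p ≠ q ∧ ∀ J : Finset ι, p ∉ J → q ∉ J →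
            IsRich w (δ * M / (#S : ℝ) ^ #J) B J) ∨
          ∃ x, (∀ J : Finset ι, x ∈ J → J ≠ univ → IsRich w (δ * M / (#S : ℝ) ^ #J) B J) ∧
            ∀ e ∈ B, ∀ e' ∈ B, (∀ i ≠ x, e i = e' i) → e = e') := by
  obtain ⟨δ, hδ, hhom⟩ := exists_isHomogeneousFamily_subset (ι := ι) (V := V) w hθ
  obtain ⟨m, hm⟩ := exists_nat_gt (1 / (δ * κ))
  refine ⟨δ, hδ, m + 1, fun S A M hS hM hA hcard => ?_⟩
  have hS₀ : 0 < #S := by lia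
  have hM₀ : 0 < M := hM.trans_lt' (by positivity)
  obtain ⟨B, hBA, hB, hBhom⟩ := hhom S A M hM₀ hA hcard
  refine ⟨B, hBA, hB, hBhom.le_card hB, hBhom.type_one_or_type_two hw (card_pos.1 hS₀) hB ?_⟩
  have hlarge : 1 < δ * κ * #S := by
    rw [div_lt_iff₀' (by positivity)] at hm
    exact hm.trans_le (by gcongr; lia)
  have hcardι : Fintype.card ι - 1 = Fintype.card ι - 2 + 1 := by
    have := Fintype.one_lt_card (α := ι)
    lia
  calc (#S : ℝ) ^ (Fintype.card ι - 2)
      < (#S : ℝ) ^ (Fintype.card ι - 2) * (δ * κ * #S) :=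
        lt_mul_of_one_lt_right (by positivity) hlarge
    _ = δ * (κ * (#S : ℝ) ^ (Fintype.card ι - 1)) := by rw [hcardι]; ring
    _ ≤ δ * M := by gcongr

end Homogeneous

/-! ### Embedding hypertrees -/

section Embedding

theorem image_comp_eq_image_univ {α ι V : Type*} [Fintype ι] [DecidableEq V] {E : Finset α}
    {ψ : α → ι} (hE : #E = Fintype.card ι) (hψ : Set.InjOn ψ E) (e : ι → V) :
    E.image (e ∘ ψ) = univ.image e := by
  rw [← image_image, eq_univ_of_card (E.image ψ) ((card_image_of_injOn hψ).trans hE)]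

theorem exists_injOn_extension {α ι : Type*} {s t : Finset α} (hst : s ⊆ t) {C : Finset ι}
    {f : α → ι} (hf : Set.InjOn f s) (hfC : Set.MapsTo f s C) (htC : #t ≤ #C) :
    ∃ g : α → ι, Set.EqOn g f s ∧ Set.InjOn g t ∧ Set.MapsTo g t C := by
  obtain ⟨C', hfC', hC', hcard⟩ :=
    exists_subsuperset_card_eq (image_subset_iff.2 hfC) (card_image_le.trans (card_le_card hst)) htC
  have hs : Set.MapsTo (fun y : t => f y) {y | ↑y ∈ s} C' := fun y hy =>
    hfC' (mem_image_of_mem f hy)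
  obtain ⟨e, he⟩ := hs.exists_equiv_extend_of_card_eq (by simp [hcard])
    fun y hy z hz hyz => Subtype.ext (hf hy hz hyz)
  refine ⟨fun y => if hy : y ∈ t then e ⟨y, hy⟩ else f y, fun y hy => ?_,
    fun y (hy : y ∈ t) z (hz : z ∈ t) hyz => ?_, fun y (hy : y ∈ t) => ?_⟩
  · simpa [hst hy] using he ⟨y, hst hy⟩ hy
  · simpa [hy, hz, Subtype.ext_iff] using hyz
  · simpa [hy] using hC' (e ⟨y, hy⟩).2

variable {α : Type} [DecidableEq α] {β ι V : Type*} {H H' : Finset (Finset α)} {E P : Finset α}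

theorem mem_vertexSet {v : α} : v ∈ vertexSet H ↔ ∃ E ∈ H, v ∈ E := by
  simp [vertexSet, Finset.mem_sup]

theorem subset_vertexSet (hE : E ∈ H) : E ⊆ vertexSet H :=
  fun _ hv => mem_vertexSet.2 ⟨E, hE, hv⟩

theorem vertexSet_mono (h : H' ⊆ H) : vertexSet H' ⊆ vertexSet H :=
  Finset.sup_mono h

theorem vertexSet_insert : vertexSet (insert E H) = E ∪ vertexSet H :=
  sup_insert

theorem vdeg_ne_one (hE : E ∈ H) (hP : P ∈ H) (hne : E ≠ P) {v : α} (hvE : v ∈ E) (hvP : v ∈ P) :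
    vdeg H v ≠ 1 := fun h =>
  hne (card_le_one.1 h.le E (mem_filter.2 ⟨hE, hvE⟩) P (mem_filter.2 ⟨hP, hvP⟩))

theorem IsHypertree.nonempty (hH : IsHypertree H) : H.Nonempty := by
  cases hH with
  | single E => exact singleton_nonempty E
  | grow E F => exact insert_nonempty _ _

/-- `E` can be attached to the subhypergraph `H'` of `H` as a leaf with parent edge `P`. -/
structure IsLeafOver (H H' : Finset (Finset α)) (E P : Finset α) : Prop where
  subset : H' ⊆ H
  mem : E ∈ H
  notMem : E ∉ H'
  parent_mem : P ∈ H'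
  inter_vertexSet : E ∩ vertexSet H' = E ∩ P

namespace IsLeafOver

theorem ne (h : IsLeafOver H H' E P) : E ≠ P :=
  fun hEP => h.notMem (hEP ▸ h.parent_mem)

theorem mem_parent (h : IsLeafOver H H' E P) {v : α} (hvE : v ∈ E) (hv : v ∈ vertexSet H') :
    v ∈ P :=
  (mem_inter.1 (h.inter_vertexSet ▸ mem_inter.2 ⟨hvE, hv⟩)).2

theorem card_lt (h : IsLeafOver H H' E P) : #H' < #H :=
  card_lt_card ⟨h.subset, fun hH => h.notMem (hH h.mem)⟩

theorem mono (h : IsLeafOver H H' E P) {H₀ : Finset (Finset α)} (hH : H ⊆ H₀) :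
    IsLeafOver H₀ H' E P :=
  { h with subset := h.subset.trans hH, mem := hH h.mem }

end IsLeafOver

theorem IsHypertree.exists_of_extend (hH : IsHypertree H)
    {Q : Finset (Finset α) → (α → β) → Prop} (single : ∀ E ∈ H, ∃ φ, Q {E} φ)
    (extend : ∀ H' E P φ, IsLeafOver H H' E P → Q H' φ → ∃ φ', Set.EqOn φ' φ ↑(E ∩ P) ∧
      ∀ χ, Set.EqOn χ φ (vertexSet H') → Set.EqOn χ φ' E → Q (insert E H') χ) :
    ∃ φ, Q H φ := by
  induction hH with
  | single E => exact single E (mem_singleton_self E)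
  | @grow H' E P _ hE hP hint ih =>
    have hleaf : IsLeafOver (insert E H') H' E P :=
      ⟨subset_insert E H', mem_insert_self E H', hE, hP, hint⟩
    obtain ⟨φ, hφ⟩ := ih (fun D hD => single D (mem_insert_of_mem hD))
      fun H'' D P φ h => extend H'' D P φ (h.mono (subset_insert E H'))
    obtain ⟨φ', hφ', hQ⟩ := extend H' E P φ hleaf hφ
    refine ⟨(vertexSet H').piecewise φ φ', hQ _ (fun v hv => piecewise_eq_of_mem _ _ _ hv)
      fun v hv => ?_⟩
    by_cases hvH : v ∈ vertexSet H'
    · rw [piecewise_eq_of_mem _ _ _ hvH, hφ' (mem_inter.2 ⟨hv, hleaf.mem_parent hv hvH⟩)]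
    · exact piecewise_eq_of_notMem _ _ _ hvH

theorem IsHypertree.exists_injOn_colouring [Nonempty ι] (hH : IsHypertree H) (D : Set α)
    (C : Finset ι) (hC : ∀ E ∈ H, #{v ∈ E | v ∈ D} ≤ #C) :
    ∃ ψ : α → ι, ∀ E ∈ H, Set.InjOn ψ (↑E ∩ D) ∧ Set.MapsTo ψ (↑E ∩ D) ↑C := by
  refine hH.exists_of_extend
    (Q := fun H (ψ : α → ι) => ∀ E ∈ H, Set.InjOn ψ (↑E ∩ D) ∧ Set.MapsTo ψ (↑E ∩ D) ↑C)
    (fun E hE => ?_)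
    fun H' E P ψ hleaf hψ => ?_
  · obtain ⟨ψ, -, hψ⟩ := exists_injOn_extension (empty_subset {v ∈ E | v ∈ D})
      (f := fun _ => Classical.arbitrary ι) (by simp) (by simp [Set.mapsTo_empty]) (hC E hE)
    exact ⟨ψ, by simpa [Set.inter_def] using hψ⟩
  · obtain ⟨hinj, hmaps⟩ := hψ P hleaf.parent_mem
    have hsub : (↑({v ∈ E ∩ P | v ∈ D}) : Set α) ⊆ ↑P ∩ D := fun v hv => by
      rw [mem_coe, mem_filter, mem_inter] at hv
      exact ⟨hv.1.2, hv.2⟩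
    obtain ⟨g, hg, hgE⟩ := exists_injOn_extension (filter_subset_filter (· ∈ D) inter_subset_left)
      (hinj.mono hsub) (hmaps.mono_left hsub) (hC E hleaf.mem)
    refine ⟨fun v => if v ∈ D then g v else ψ v, fun v hv => ?_, fun χ hχ hχE => ?_⟩
    · by_cases hvD : v ∈ D
      · simpa [hvD] using hg (mem_filter.2 ⟨hv, hvD⟩)
      · simp [hvD]
    · refine forall_mem_insert _ _ _ |>.2 ⟨?_, fun E' hE' => ?_⟩
      · have hχg : Set.EqOn g χ (↑E ∩ D) := fun v hv => by simpa [hv.2] using (hχE hv.1).symm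
        have hgE' : Set.InjOn g (↑E ∩ D) ∧ Set.MapsTo g (↑E ∩ D) C := by
          simpa [Set.inter_def] using hgE
        exact ⟨hgE'.1.congr hχg, hgE'.2.congr hχg⟩
      · have hχψ : Set.EqOn ψ χ (↑E' ∩ D) := fun v hv =>
          (hχ (subset_vertexSet hE' hv.1)).symm
        exact ⟨(hψ E' hE').1.congr hχψ, (hψ E' hE').2.congr hχψ⟩

theorem IsHypertree.exists_bicolouring [Fintype ι] [DecidableEq ι] [Nonempty ι]
    (hH : IsHypertree H) (D : Finset α) (C : Finset ι) (hC : ∀ E ∈ H, #(E ∩ D) ≤ #C)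
    (hC' : ∀ E ∈ H, #(E \ D) ≤ #Cᶜ) :
    ∃ ψ : α → ι, ∀ E ∈ H, Set.InjOn ψ E ∧ ∀ v ∈ E, ψ v ∈ C ↔ v ∈ D := by
  obtain ⟨ψ₁, h₁⟩ := hH.exists_injOn_colouring D C (by simpa [filter_mem_eq_inter] using hC)
  obtain ⟨ψ₂, h₂⟩ := hH.exists_injOn_colouring (↑D)ᶜ Cᶜ
    (by simpa [filter_notMem_eq_sdiff] using hC')
  refine ⟨fun v => if v ∈ D then ψ₁ v else ψ₂ v, fun E hE => ?_⟩
  have hiff : ∀ v ∈ E, (if v ∈ D then ψ₁ v else ψ₂ v) ∈ C ↔ v ∈ D := fun v hv => by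
    by_cases hvD : v ∈ D
    · simpa [hvD] using (h₁ E hE).2 ⟨hv, hvD⟩
    · simpa [hvD] using (h₂ E hE).2 ⟨hv, hvD⟩
  refine ⟨fun v hv u hu (hvu : ite _ _ _ = ite _ _ _) => ?_, hiff⟩
  have hD : v ∈ D ↔ u ∈ D := by rw [← hiff v hv, ← hiff u hu, hvu]
  by_cases hvD : v ∈ D
  · exact (h₁ E hE).1 ⟨hv, hvD⟩ ⟨hu, hD.1 hvD⟩ (by simpa [hvD, hD.1 hvD] using hvu)
  · exact (h₂ E hE).1 ⟨hv, hvD⟩ ⟨hu, mt hD.2 hvD⟩ (by simpa [hvD, mt hD.2 hvD] using hvu)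

variable [DecidableEq V] [Fintype ι] {F : Finset (Finset V)} {A : Finset (ι → V)} {t w ℓ : ℕ}
  {z L : ℝ} {Adm : Finset (Finset V) → Prop} {ψ : α → ι}

/-- The tuple `e` lists the vertices of an edge of `F` without repetition. -/
def IsEnumeration (F : Finset (Finset V)) (e : ι → V) : Prop :=
  Function.Injective e ∧ univ.image e ∈ F

/-- A property `Adm` of sets of edges of `F` that can be preserved greedily: it holds for single
edges, and a set of fewer than `t` edges satisfying it has at most `z` extensions by an edge of `F`
that violate it. -/
structure HasFewObstructions (F : Finset (Finset V)) (t : ℕ) (z : ℝ)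
    (Adm : Finset (Finset V) → Prop) : Prop where
  singleton : ∀ E ∈ F, Adm {E}
  card_le : ∀ S, Adm S → S.Nonempty → #S < t → #{E ∈ F | ¬ Adm (insert E S)} ≤ z

/-- On each edge of `H`, the map `φ` factors through the colouring `ψ` and a tuple in `A`. -/
def FollowsTuples (A : Finset (ι → V)) (ψ : α → ι) (H : Finset (Finset α)) (φ : α → V) : Prop :=
  ∀ E ∈ H, ∃ e ∈ A, Set.EqOn φ (e ∘ ψ) E

theorem card_le_mul_card_image_univ (U : Finset (ι → V)) :
    #U ≤ Fintype.card ι ^ Fintype.card ι * #(U.image fun u => univ.image u) := by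
  refine card_le_mul_card_image U _ fun D hD => ?_
  obtain ⟨u, -, rfl⟩ := mem_image.1 hD
  have hsub : {u' ∈ U | univ.image u' = univ.image u} ⊆ Fintype.piFinset fun _ => univ.image u :=
    fun u' hu' => Fintype.mem_piFinset.2 fun i =>
      (mem_filter.1 hu').2 ▸ mem_image_of_mem u' (mem_univ i)
  refine (card_le_card hsub).trans ?_
  rw [Fintype.card_piFinset, prod_const, card_univ]
  exact Nat.pow_le_pow_left card_image_le _

theorem HasFewObstructions.exists_insert (hAdm : HasFewObstructions F t z Adm)
    {S : Finset (Finset V)} (hS : Adm S) (hne : S.Nonempty) (hSt : #S < t) {U : Finset (ι → V)}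
    (hU : ∀ u ∈ U, univ.image u ∈ F) (hz : z * Fintype.card ι ^ Fintype.card ι < #U) :
    ∃ u ∈ U, Adm (insert (univ.image u) S) := by
  by_contra! hbad
  have hsub : (U.image fun u => univ.image u) ⊆ {E ∈ F | ¬ Adm (insert E S)} :=
    image_subset_iff.2 fun u hu => mem_filter.2 ⟨hU u hu, hbad u hu⟩
  refine hz.not_ge ?_
  calc (#U : ℝ) ≤ Fintype.card ι ^ Fintype.card ι * #(U.image fun u => univ.image u) :=
        mod_cast card_le_mul_card_image_univ U
    _ ≤ Fintype.card ι ^ Fintype.card ι * z := by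
        gcongr
        exact le_trans (mod_cast card_le_card hsub) (hAdm.card_le S hS hne hSt)
    _ = z * Fintype.card ι ^ Fintype.card ι := mul_comm _ _

theorem image_image_congr {φ χ : α → V} (h : Set.EqOn φ χ (vertexSet H)) :
    (H.image fun E => E.image φ) = H.image fun E => E.image χ :=
  image_congr fun _ hE => image_congr fun _ hv => h (subset_vertexSet hE hv)

theorem IsLeafOver.injOn_vertexSet (hleaf : IsLeafOver H H' E P) {φ φ' : α → V}
    (hφ : Set.InjOn φ (vertexSet H')) (hφ' : Set.InjOn φ' E)
    (hnew : ∀ v ∈ E, v ∉ P → φ' v ∉ (vertexSet H').image φ) {χ : α → V}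
    (hχ : Set.EqOn χ φ (vertexSet H')) (hχE : Set.EqOn χ φ' E) :
    Set.InjOn χ (vertexSet (insert E H')) := by
  have hcross : ∀ u ∈ vertexSet H', ∀ v ∈ E, χ u = χ v → u = v := fun u hu v hv huv => by
    by_cases hvP : v ∈ P
    · have hvH := subset_vertexSet hleaf.parent_mem hvP
      exact hφ hu hvH (by rw [← hχ hu, ← hχ hvH, huv])
    · exact absurd (mem_image.2 ⟨u, hu, by rw [← hχ hu, ← hχE hv, huv]⟩) (hnew v hv hvP)
  rw [vertexSet_insert]
  intro u hu v hv huv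
  rcases mem_union.1 hu with huE | huH <;> rcases mem_union.1 hv with hvE | hvH
  · exact hφ' huE hvE (by rw [← hχE huE, ← hχE hvE, huv])
  · exact (hcross v hvH u huE huv.symm).symm
  · exact hcross u huH v hvE huv
  · exact hφ huH hvH (by rw [← hχ huH, ← hχ hvH, huv])

theorem exists_embedding_of_card_extensions [DecidableEq ι] (hAdm : HasFewObstructions F #H z Adm)
    (hH : IsHypertree H) (hunif : ∀ E ∈ H, #E = Fintype.card ι) (hψ : ∀ E ∈ H, Set.InjOn ψ E)
    (hA : A.Nonempty) (hAF : ∀ e ∈ A, IsEnumeration F e)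
    (hext : ∀ H' E P φ, IsLeafOver H H' E P → FollowsTuples A ψ H' φ → ∀ e ∈ A,
      z * Fintype.card ι ^ Fintype.card ι <
        #(extensions A ((E ∩ P).image ψ) ((vertexSet H').image φ) e)) :
    ∃ φ : α → V, Set.InjOn φ (vertexSet H) ∧ (∀ E ∈ H, E.image φ ∈ F) ∧
      Adm (H.image fun E => E.image φ) := by
  have himage : ∀ E ∈ H, ∀ e : ι → V, E.image (e ∘ ψ) = univ.image e := fun E hE =>
    image_comp_eq_image_univ (hunif E hE) (hψ E hE)
  suffices h : ∃ φ : α → V, Set.InjOn φ (vertexSet H) ∧ FollowsTuples A ψ H φ ∧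
      Adm (H.image fun E => E.image φ) by
    obtain ⟨φ, hinj, hfol, hadm⟩ := h
    refine ⟨φ, hinj, fun E hE => ?_, hadm⟩
    obtain ⟨e, he, heq⟩ := hfol E hE
    rw [image_congr heq, himage E hE]
    exact (hAF e he).2
  refine hH.exists_of_extend (Q := fun H' (φ : α → V) => Set.InjOn φ (vertexSet H') ∧
    FollowsTuples A ψ H' φ ∧ Adm (H'.image fun E => E.image φ)) (fun E hE => ?_)
    fun H' E P φ hleaf ⟨hinj, hfol, hadm⟩ => ?_
  · obtain ⟨e, he⟩ := hA
    refine ⟨e ∘ ψ, ?_, fun _ _ => ⟨e, he, fun _ _ => rfl⟩, ?_⟩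
    · simpa [vertexSet] using (hAF e he).1.comp_injOn (hψ E hE)
    · rw [image_singleton, himage E hE]
      exact hAdm.singleton _ (hAF e he).2
  · obtain ⟨e₀, he₀, hφe₀⟩ := hfol P hleaf.parent_mem
    obtain ⟨e, he, hadm'⟩ := hAdm.exists_insert hadm ⟨_, mem_image_of_mem _ hleaf.parent_mem⟩
      (card_image_le.trans_lt hleaf.card_lt) (fun e he => (hAF e (mem_extensions.1 he).1).2)
      (hext H' E P φ hleaf hfol e₀ he₀)
    obtain ⟨heA, heJ, heW⟩ := mem_extensions.1 he
    refine ⟨e ∘ ψ, fun v hv => ?_, fun χ hχ hχE => ⟨?_, ?_, ?_⟩⟩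
    · rw [hφe₀ (mem_inter.1 hv).2]
      exact heJ (mem_image_of_mem ψ hv)
    · refine hleaf.injOn_vertexSet hinj ((hAF e heA).1.comp_injOn (hψ E hleaf.mem))
        (fun v hv hvP => heW _ fun hmem => hvP ?_) hχ hχE
      obtain ⟨u, hu, huv⟩ := mem_image.1 hmem
      obtain ⟨huE, huP⟩ := mem_inter.1 hu
      exact hψ E hleaf.mem huE hv huv ▸ huP
    · exact forall_mem_insert _ _ _ |>.2 ⟨⟨e, heA, hχE⟩, fun E' hE' =>
        let ⟨e', he', heq⟩ := hfol E' hE'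
        ⟨e', he', (hχ.mono (coe_subset.2 (subset_vertexSet hE'))).trans heq⟩⟩
    · rw [image_insert, image_congr hχE, himage E hleaf.mem, image_image_congr hχ]
      exact hadm'

/-- `A` is rich over every set of at most `ℓ` coordinates that avoids some fixed pair. -/
def IsRichOffPair (ℓ w : ℕ) (L : ℝ) (A : Finset (ι → V)) : Prop :=
  ∃ p q, p ≠ q ∧ ∀ J : Finset ι, p ∉ J → q ∉ J → #J ≤ ℓ → IsRich w L A J

theorem TwoContractible.exists_pairs (h2 : TwoContractible H) :
    ∃ D : Finset α, (∀ E ∈ H, #(E ∩ D) = 2) ∧ ∀ v ∈ D, vdeg H v = 1 := by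
  choose! T hT hcard using fun E hE => exists_subset_card_eq (h2 E hE)
  have hdeg : ∀ v ∈ H.biUnion T, vdeg H v = 1 := fun v hv =>
    let ⟨E, hE, hvT⟩ := mem_biUnion.1 hv
    (mem_filter.1 (hT E hE hvT)).2
  refine ⟨H.biUnion T, fun E hE => ?_, hdeg⟩
  suffices E ∩ H.biUnion T = T E by rw [this, hcard E hE]
  refine Subset.antisymm (fun v hv => ?_) fun v hv =>
    mem_inter.2 ⟨(mem_filter.1 (hT E hE hv)).1, mem_biUnion.2 ⟨E, hE, hv⟩⟩
  obtain ⟨hvE, hvD⟩ := mem_inter.1 hv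
  obtain ⟨E', hE', hvT⟩ := mem_biUnion.1 hvD
  by_contra hvT'
  exact vdeg_ne_one hE hE' (fun h => hvT' (h ▸ hvT)) hvE (mem_filter.1 (hT E' hE' hvT)).1
    (hdeg v hvD)

theorem exists_embedding_of_isRichOffPair (hAdm : HasFewObstructions F #H z Adm)
    (hH : IsHypertree H) (hunif : ∀ E ∈ H, #E = Fintype.card ι) (h2 : TwoContractible H)
    (hov : Overlapping ℓ H) (hA : A.Nonempty) (hAF : ∀ e ∈ A, IsEnumeration F e)
    (hrich : IsRichOffPair ℓ #(vertexSet H) L A)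
    (hL : z * Fintype.card ι ^ Fintype.card ι < L) :
    ∃ φ : α → V, Set.InjOn φ (vertexSet H) ∧ (∀ E ∈ H, E.image φ ∈ F) ∧
      Adm (H.image fun E => E.image φ) := by
  obtain ⟨p, q, hpq, hrich⟩ := hrich
  obtain ⟨D, hD2, hD⟩ := h2.exists_pairs
  have : Nonempty ι := ⟨p⟩
  obtain ⟨ψ, hψ⟩ := hH.exists_bicolouring D {p, q} (fun E hE => by rw [hD2 E hE, card_pair hpq])
    fun E hE => by
      have := card_inter_add_card_sdiff E D
      rw [hD2 E hE, hunif E hE] at this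
      rw [card_compl, card_pair hpq]
      omega
  refine exists_embedding_of_card_extensions hAdm hH hunif (fun E hE => (hψ E hE).1) hA hAF
    fun H' E P φ hleaf _ e he => hL.trans_le ?_
  have hPH := hleaf.subset hleaf.parent_mem
  have hpair : ∀ i ∈ (E ∩ P).image ψ, i ∉ ({p, q} : Finset ι) := fun i hi hpq => by
    obtain ⟨v, hv, rfl⟩ := mem_image.1 hi
    obtain ⟨hvE, hvP⟩ := mem_inter.1 hv
    exact vdeg_ne_one hleaf.mem hPH hleaf.ne hvE hvP (hD v (((hψ E hleaf.mem).2 v hvE).1 hpq))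
  exact hrich _ (fun hp => hpair p hp (by simp)) (fun hq => hpair q hq (by simp))
    (card_image_le.trans (hov E hleaf.mem P hPH hleaf.ne)) e he _
    (card_image_le.trans (card_le_card (vertexSet_mono hleaf.subset)))

/-- The tuples of the cones over the base tuples `U`, with apexes `apex j u` in coordinate `0`. -/
noncomputable def coneTuples {m σ : ℕ} (U : Finset (Fin m → V)) (apex : Fin σ → (Fin m → V) → V) :
    Finset (Fin (m + 1) → V) :=
  univ.biUnion fun j => U.image fun u => Fin.cons (apex j u) u

/-- Every base tuple in `U` spans an edge of `F` with each of its `σ` distinct apexes, and no apex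
occurs in a base tuple. -/
structure IsCone (F : Finset (Finset V)) {m σ : ℕ} (U : Finset (Fin m → V))
    (apex : Fin σ → (Fin m → V) → V) : Prop where
  isEnumeration : ∀ e ∈ coneTuples U apex, IsEnumeration F e
  apex_ne : ∀ u ∈ U, ∀ u' ∈ U, ∀ j i, apex j u ≠ u' i
  apex_injective : ∀ u ∈ U, Function.Injective fun j => apex j u

/-- A nonempty cone in which both the base tuples and the cone tuples through a fixed apex are rich
over sets of at most `ℓ` coordinates. -/
structure IsRichCone (ℓ w : ℕ) (L : ℝ) (F : Finset (Finset V)) {m σ : ℕ} (U : Finset (Fin m → V))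
    (apex : Fin σ → (Fin m → V) → V) : Prop extends IsCone F U apex where
  nonempty : U.Nonempty
  isRich : ∀ J, #J ≤ ℓ → IsRich w L U J
  isRich_cons : ∀ j J, 0 ∈ J → #J ≤ ℓ → IsRich w L (U.image fun u => Fin.cons (apex j u) u) J

section Cone

variable {m σ : ℕ} {U : Finset (Fin m → V)} {apex : Fin σ → (Fin m → V) → V} {S : Finset α}
  {ψ : α → Fin (m + 1)}

theorem mem_coneTuples {e : Fin (m + 1) → V} :
    e ∈ coneTuples U apex ↔ ∃ j, ∃ u ∈ U, Fin.cons (apex j u) u = e := by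
  simp [coneTuples]

theorem IsCone.mono {U' : Finset (Fin m → V)} (h : IsCone F U apex) (hU : U' ⊆ U) :
    IsCone F U' apex where
  isEnumeration e he :=
    let ⟨j, u, hu, hue⟩ := mem_coneTuples.1 he
    h.isEnumeration e (mem_coneTuples.2 ⟨j, u, hU hu, hue⟩)
  apex_ne u hu u' hu' := h.apex_ne u (hU hu) u' (hU hu')
  apex_injective u hu := h.apex_injective u (hU hu)

theorem IsRichCone.le_card_extensions_of_zero_mem (h : IsRichCone ℓ w L F U apex)
    {J : Finset (Fin (m + 1))} (hJ : 0 ∈ J) (hJℓ : #J ≤ ℓ) {W : Finset V} (hW : #W ≤ w)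
    {e : Fin (m + 1) → V} (he : e ∈ coneTuples U apex) :
    L ≤ #(extensions (coneTuples U apex) J W e) := by
  obtain ⟨j, u, hu, rfl⟩ := mem_coneTuples.1 he
  refine (h.isRich_cons j J hJ hJℓ _ (mem_image_of_mem _ hu) W hW).trans ?_
  exact mod_cast card_le_card (extensions_mono (subset_biUnion_of_mem
    (fun j => U.image fun u => (Fin.cons (apex j u) u : Fin (m + 1) → V)) (mem_univ j)) W _)

theorem IsRichCone.le_card_extensions_of_zero_notMem (h : IsRichCone ℓ w L F U apex)
    {J : Finset (Fin (m + 1))} (hJ : 0 ∉ J) (hJℓ : #J ≤ ℓ) {W : Finset V} (hW : #W ≤ w)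
    (hfree : ∀ u ∈ U, ∃ j, apex j u ∉ W) {e : Fin (m + 1) → V} (he : e ∈ coneTuples U apex) :
    L ≤ #(extensions (coneTuples U apex) J W e) := by
  obtain ⟨-, u, hu, rfl⟩ := mem_coneTuples.1 he
  have : Nonempty (Fin σ) := ⟨(hfree u hu).choose⟩
  choose! j hj using hfree
  have hJ' : #({i | Fin.succ i ∈ J} : Finset (Fin m)) ≤ ℓ :=
    (card_le_card_of_injOn Fin.succ (by simp [Set.MapsTo]) (Fin.succ_injective m).injOn).trans hJℓ
  refine (h.isRich _ hJ' u hu W hW).trans ?_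
  refine mod_cast card_le_card_of_injOn (fun u' => Fin.cons (apex (j u') u') u') (fun u' hu' => ?_)
    fun u' _ u'' _ heq => (Fin.cons_inj.1 heq).2
  obtain ⟨hu'U, heq, havoid⟩ := mem_extensions.1 hu'
  refine mem_extensions.2 ⟨mem_coneTuples.2 ⟨_, u', hu'U, rfl⟩, ?_, ?_⟩
  · refine Fin.cases (fun h0 => absurd h0 hJ) fun i hi => ?_
    simpa using heq (mem_filter.2 ⟨mem_univ i, hi⟩)
  · refine Fin.cases (fun _ => by simpa using hj u' hu'U) fun i hi => ?_
    simpa using havoid i (by simpa using hi)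

theorem IsRichCone.exists_apex_notMem (h : IsRichCone ℓ w L F U apex) (hS : #S ≤ σ) {y : α}
    (hyS : y ∈ S) (hψ : ∀ E ∈ H, ∀ v ∈ E, ψ v = 0 ↔ v ∈ S) (hy : y ∉ vertexSet H) {φ : α → V}
    (hφ : FollowsTuples (coneTuples U apex) ψ H φ) {u : Fin m → V} (hu : u ∈ U) :
    ∃ j, apex j u ∉ (vertexSet H).image φ := by
  by_contra! hall
  have hsub : (univ.image fun j => apex j u) ⊆ (S.erase y).image φ := by
    refine image_subset_iff.2 fun j _ => ?_
    obtain ⟨v, hv, hvj⟩ := mem_image.1 (hall j)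
    refine mem_image.2 ⟨v, mem_erase.2 ⟨fun hvy => hy (hvy ▸ hv), ?_⟩, hvj⟩
    by_contra hvS
    obtain ⟨E, hE, hvE⟩ := mem_vertexSet.1 hv
    obtain ⟨e, he, heq⟩ := hφ E hE
    obtain ⟨j', u', hu', rfl⟩ := mem_coneTuples.1 he
    obtain ⟨i, hi⟩ := Fin.exists_succ_eq.2 fun h0 => hvS ((hψ E hE v hvE).1 h0)
    have hφv := heq hvE
    rw [Function.comp_apply, ← hi, Fin.cons_succ, hvj] at hφv
    exact h.apex_ne u hu u' hu' j i hφv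
  have hcard := (card_le_card hsub).trans card_image_le
  rw [card_image_of_injective _ (h.apex_injective u hu), card_univ, Fintype.card_fin,
    card_erase_of_mem hyS] at hcard
  have := card_pos.2 ⟨y, hyS⟩
  omega

theorem exists_embedding_of_isRichCone (hAdm : HasFewObstructions F #H z Adm) (hH : IsHypertree H)
    (hunif : ∀ E ∈ H, #E = m + 1) (hov : Overlapping ℓ H) (hS : IsCrosscut H S) (hσ : #S = σ)
    (hU : IsRichCone ℓ #(vertexSet H) L F U apex)
    (hL : z * (m + 1 : ℝ) ^ (m + 1) < L) :
    ∃ φ : α → V, Set.InjOn φ (vertexSet H) ∧ (∀ E ∈ H, E.image φ ∈ F) ∧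
      Adm (H.image fun E => E.image φ) := by
  obtain ⟨ψ, hψ⟩ := hH.exists_bicolouring S ({0} : Finset (Fin (m + 1)))
    (fun E hE => by rw [hS E hE, card_singleton]) fun E hE => by
      have := card_inter_add_card_sdiff E S
      rw [hS E hE, hunif E hE] at this
      rw [card_compl, card_singleton, Fintype.card_fin]
      omega
  have hzero : ∀ E ∈ H, ∀ v ∈ E, ψ v = 0 ↔ v ∈ S := fun E hE v hv => by
    simpa using (hψ E hE).2 v hv
  obtain ⟨E₀, hE₀⟩ := hH.nonempty
  obtain ⟨y₀, hy₀⟩ := card_pos.1 (zero_lt_one.trans_eq (hS E₀ hE₀).symm)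
  have hσ0 : 0 < σ := hσ ▸ card_pos.2 ⟨y₀, (mem_inter.1 hy₀).2⟩
  refine exists_embedding_of_card_extensions hAdm hH (by simpa using hunif)
    (fun E hE => (hψ E hE).1) ?_ hU.isEnumeration fun H' E P φ hleaf hφ e he => ?_
  · obtain ⟨u, hu⟩ := hU.nonempty
    exact ⟨_, mem_coneTuples.2 ⟨⟨0, hσ0⟩, u, hu, rfl⟩⟩
  have hPH := hleaf.subset hleaf.parent_mem
  have hW : #((vertexSet H').image φ) ≤ #(vertexSet H) :=
    card_image_le.trans (card_le_card (vertexSet_mono hleaf.subset))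
  have hJℓ : #((E ∩ P).image ψ) ≤ ℓ := card_image_le.trans (hov E hleaf.mem P hPH hleaf.ne)
  refine lt_of_lt_of_le (by simpa using hL) (?_ : L ≤ _)
  by_cases h0 : 0 ∈ (E ∩ P).image ψ
  · exact hU.le_card_extensions_of_zero_mem h0 hJℓ hW he
  · obtain ⟨y, hy⟩ := card_pos.1 (zero_lt_one.trans_eq (hS E hleaf.mem).symm)
    obtain ⟨hyE, hyS⟩ := mem_inter.1 hy
    have hyP : y ∉ P := fun hyP =>
      h0 (mem_image.2 ⟨y, mem_inter.2 ⟨hyE, hyP⟩, (hzero E hleaf.mem y hyE).2 hyS⟩)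
    exact hU.le_card_extensions_of_zero_notMem h0 hJℓ hW (fun u hu =>
      hU.exists_apex_notMem hσ.le hyS (fun D hD => hzero D (hleaf.subset hD))
        (fun hyH => hyP (hleaf.mem_parent hyE hyH)) hφ hu) he

end Cone

end Embedding

/-! ### Dense hypergraphs contain rich families of edges -/

section Structure

section Tuples

variable {ι V : Type*}

theorem exists_forall_of_hereditary_of_card_le {X C : Type*} [Fintype C] [Nonempty C]
    {good : Finset X → X → C → Prop}
    (good_mono : ∀ ⦃A B : Finset X⦄ (x : X) (c : C), A ⊆ B → good A x c → good B x c)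
    (s : Finset X)
    (h : ∀ c, ∀ r ⊆ s, #s ≤ Fintype.card C * #r → ∃ A ⊆ r, A.Nonempty ∧ ∀ x ∈ A, good A x c) :
    ∃ A ⊆ s, A.Nonempty ∧ ∀ x ∈ A, ∀ c, good A x c := by
  by_contra! hbad
  obtain ⟨col, hcol⟩ := exists_hereditary_colouring (bad := fun A x c => ¬ good A x c)
    (fun _ _ x c hAB => mt (good_mono x c hAB)) s hbad
  obtain ⟨c, hc⟩ := exists_card_le_card_mul_fiber s col
  obtain ⟨A, hA, hne, hgood⟩ := h c _ (filter_subset _ _) hc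
  obtain ⟨x, hx, hxbad⟩ := hcol A (hA.trans (filter_subset _ _)) hne
  exact hxbad ((mem_filter.1 (hA hx)).2 ▸ hgood x hx)

theorem ForcesCoordinate.card_extensions_mul_le [Fintype ι] {S : Finset V}
    {A : Finset (ι → V)} {J : Finset ι} (h : ForcesCoordinate A J) (hA : ∀ e ∈ A, ∀ i, e i ∈ S)
    (W : Finset V) {e : ι → V} (he : e ∈ A) :
    #(extensions A J W e) * (#S ^ #J * #S) ≤ #S ^ Fintype.card ι := by
  obtain ⟨i, hi, hforce⟩ := h
  have hagree : ∀ u ∈ extensions A J W e, Set.EqOn u e (insert i J : Finset ι) := fun u hu => by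
    obtain ⟨huA, heq, -⟩ := mem_extensions.1 hu
    intro a ha
    rcases mem_insert.1 ha with rfl | haJ
    · exact hforce u huA e he heq
    · exact heq haJ
  have hinj : Set.InjOn ((insert i J)ᶜ : Finset ι).restrict (extensions A J W e : Set (ι → V)) :=
    fun u hu u' hu' heq => funext fun a => by
      by_cases ha : a ∈ insert i J
      · exact (hagree u hu ha).trans (hagree u' hu' ha).symm
      · exact restrict_eq_restrict_iff_eqOn.1 heq (mem_coe.2 (mem_compl.2 ha))
  have hcard := card_image_restrict_le (fun u hu => hA u (mem_extensions.1 hu).1)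
    ((insert i J)ᶜ : Finset ι) (A := extensions A J W e)
  rw [card_image_of_injOn hinj] at hcard
  calc #(extensions A J W e) * (#S ^ #J * #S)
      ≤ #S ^ #((insert i J)ᶜ : Finset ι) * #S ^ #(insert i J) := by
        rw [card_insert_of_notMem hi, pow_succ]
        gcongr
    _ = #S ^ Fintype.card ι := by rw [← pow_add, card_compl_add_card]

theorem exists_forall_isRich_subset [Fintype ι] (w : ℕ) {θ : ℝ} (hθ : 0 < θ) :
    ∃ δ > 0, ∃ n₀ : ℕ, ∀ (S : Finset V) (A : Finset (ι → V)), n₀ ≤ #S →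
      (∀ e ∈ A, ∀ i, e i ∈ S) → θ * (#S : ℝ) ^ Fintype.card ι ≤ #A →
      ∃ B ⊆ A, B.Nonempty ∧ ∀ J, IsRich w (δ * (#S : ℝ) ^ Fintype.card ι / (#S : ℝ) ^ #J) B J := by
  obtain ⟨δ, hδ, h⟩ := exists_isHomogeneousFamily_subset (ι := ι) (V := V) w hθ
  obtain ⟨n₀, hn₀⟩ := exists_nat_gt (1 / δ)
  refine ⟨δ, hδ, n₀, fun S A hn hA hcard => ?_⟩
  have hS : 1 < δ * #S := by
    rw [← div_lt_iff₀' hδ]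
    exact hn₀.trans_le (mod_cast hn)
  have hS₀ : 0 < (#S : ℝ) := pos_of_mul_pos_right (one_pos.trans hS) hδ.le
  obtain ⟨B, hBA, hB, hhom⟩ := h S A _ (by positivity) hA hcard
  refine ⟨B, hBA, hB, fun J => (hhom.isRich_or_forcesCoordinate J).resolve_right fun hforce => ?_⟩
  obtain ⟨e, he⟩ := hB
  have hlow := hhom.isRich_zero J e he ∅ (by simp)
  have hup : (#(extensions B J ∅ e) : ℝ) * ((#S : ℝ) ^ #J * #S) ≤ (#S : ℝ) ^ Fintype.card ι :=
    mod_cast hforce.card_extensions_mul_le (fun e he => hA e (hBA he)) ∅ he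
  rw [div_le_iff₀ (by positivity)] at hlow
  have hpow : 0 < (#S : ℝ) ^ Fintype.card ι := by positivity
  nlinarith

end Tuples

variable {V : Type*} [DecidableEq V] {k ℓ w σ : ℕ} {L L' : ℝ} {F G : Finset (Finset V)}
  {S : Finset V}

/-- No nonempty family of enumerations of edges of `F` is rich off a pair of coordinates. -/
def AvoidsRichPairs (k ℓ w : ℕ) (L : ℝ) (F : Finset (Finset V)) : Prop :=
  ∀ A : Finset (Fin k → V), A.Nonempty → (∀ e ∈ A, IsEnumeration F e) → ¬ IsRichOffPair ℓ w L A

theorem AvoidsRichPairs.mono (h : AvoidsRichPairs k ℓ w L F) (hGF : G ⊆ F) (hL : L ≤ L') :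
    AvoidsRichPairs k ℓ w L' G := fun A hA hAG ⟨p, q, hpq, hrich⟩ =>
  h A hA (fun e he => ⟨(hAG e he).1, hGF (hAG e he).2⟩)
    ⟨p, q, hpq, fun J hp hq hJ => (hrich J hp hq hJ).mono le_rfl hL⟩

theorem div_pow_le_div_pow_of_le {x : ℝ} {n s : ℕ} (hx : 0 ≤ x) (hn : 1 ≤ n) (hs : s ≤ ℓ) :
    x / (n : ℝ) ^ ℓ ≤ x / (n : ℝ) ^ s := by
  have : (1 : ℝ) ≤ n := mod_cast hn
  gcongr

theorem IsEnumeration.apply_mem {e : Fin k → V} (he : IsEnumeration F e)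
    (hF : F ⊆ powersetCard k S) (i : Fin k) : e i ∈ S :=
  (mem_powersetCard.1 (hF he.2)).1 (mem_image_of_mem e (mem_univ i))

theorem AvoidsRichPairs.exists_type_two_subset (ℓ : ℕ) (hk : 1 ≤ k) (hw : 1 ≤ w) {θ κ : ℝ}
    (hθ : 0 < θ) (hκ : 0 < κ) :
    ∃ δ > 0, ∃ n₀ : ℕ, ∀ (S : Finset V) (F : Finset (Finset V)) (A : Finset (Fin (k + 1) → V))
      (M : ℝ), n₀ ≤ #S → κ * (#S : ℝ) ^ k ≤ M → F ⊆ powersetCard (k + 1) S →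
      AvoidsRichPairs (k + 1) ℓ w (δ * M / (#S : ℝ) ^ ℓ) F → (∀ e ∈ A, IsEnumeration F e) →
      θ * M ≤ #A → ∃ B ⊆ A, B.Nonempty ∧ δ * M ≤ #B ∧
        ∃ x, (∀ J, x ∈ J → J ≠ univ → IsRich w (δ * M / (#S : ℝ) ^ #J) B J) ∧
          ∀ e ∈ B, ∀ e' ∈ B, (∀ i ≠ x, e i = e' i) → e = e' := by
  have : Nontrivial (Fin (k + 1)) := Fin.nontrivial_iff_two_le.2 (by omega)
  obtain ⟨δ, hδ, n₀, h⟩ := exists_type_one_or_type_two_subset (ι := Fin (k + 1)) (V := V) hw hθ hκ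
  refine ⟨δ, hδ, max n₀ 1, fun S F A M hn hM hF havoid hAF hA => ?_⟩
  have hM₀ : 0 ≤ M := hM.trans' (by positivity)
  obtain ⟨B, hBA, hB, hcard, htype⟩ := h S A M (le_of_max_le_left hn) (by simpa using hM)
    (fun e he => (hAF e he).apply_mem hF) hA
  refine ⟨B, hBA, hB, hcard, ?_⟩
  rcases htype with ⟨p, q, hpq, hrich⟩ | ⟨x, hrich, hdet⟩
  · exact absurd ⟨p, q, hpq, fun J hp hq hJ => (hrich J hp hq).mono le_rfl
        (div_pow_le_div_pow_of_le (by positivity) (le_of_max_le_right hn) hJ)⟩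
      (havoid B hB fun e he => hAF e (hBA he))
  · exact ⟨x, hrich, hdet⟩

theorem exists_enumerations (hG : ∀ E ∈ G, #E = k) :
    ∃ A : Finset (Fin k → V), (∀ e ∈ A, Function.Injective e) ∧
      A.image (fun e => univ.image e) = G ∧
      ∀ e ∈ A, ∀ e' ∈ A, ∀ J : Finset (Fin k), J.image e = J.image e' → Set.EqOn e e' J := by
  obtain ⟨_, -⟩ := exists_wellFoundedLT V
  refine ⟨G.attach.image fun E => E.1.orderEmbOfFin (hG E.1 E.2), fun e he => ?_, ?_,
    fun e he e' he' J hJ => ?_⟩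
  · obtain ⟨E, -, rfl⟩ := mem_image.1 he
    exact (OrderEmbedding.strictMono _).injective
  · rw [image_image]
    refine Eq.trans (image_congr fun E _ => ?_) G.attach_image_val
    exact coe_injective (by simp)
  · obtain ⟨E, -, rfl⟩ := mem_image.1 he
    obtain ⟨E', -, rfl⟩ := mem_image.1 he'
    have hrange := (StrictMono.range_inj
      ((OrderEmbedding.strictMono _).comp (Subtype.strictMono_coe (· ∈ J)))
      ((OrderEmbedding.strictMono _).comp (Subtype.strictMono_coe (· ∈ J)))).1
      (by simpa [Set.range_comp] using congrArg ((↑) : Finset V → Set V) hJ)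
    exact fun i hi => congrFun hrange ⟨i, hi⟩

theorem exists_determined_subset (ℓ : ℕ) (hk : 1 ≤ k) (hw : 1 ≤ w) {θ κ : ℝ} (hθ : 0 < θ)
    (hκ : 0 < κ) :
    ∃ δ > 0, ∃ n₀ : ℕ, ∀ (S : Finset V) (G : Finset (Finset V)) (M : ℝ), n₀ ≤ #S →
      κ * (#S : ℝ) ^ k ≤ M → G ⊆ powersetCard (k + 1) S →
      AvoidsRichPairs (k + 1) ℓ w (δ * M / (#S : ℝ) ^ ℓ) G → θ * M ≤ #G →
      ∃ G' ⊆ G, G'.Nonempty ∧ δ * M ≤ #G' ∧ ∃ x : Finset V → V, (∀ E ∈ G', x E ∈ E) ∧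
        Set.InjOn (fun E : Finset V => E.erase (x E)) (G' : Set (Finset V)) := by
  obtain ⟨δ, hδ, n₀, h⟩ := AvoidsRichPairs.exists_type_two_subset (V := V) ℓ hk hw hθ hκ
  refine ⟨δ, hδ, n₀, fun S G M hn hM hG havoid hcard => ?_⟩
  obtain ⟨A, hAinj, rfl, hAeq⟩ := exists_enumerations fun E hE => (mem_powersetCard.1 (hG hE)).2
  have hinj : Set.InjOn (fun e : Fin (k + 1) → V => univ.image e) A := fun e he e' he' heq =>
    funext fun i => hAeq e he e' he' univ heq (mem_coe.2 (mem_univ i))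
  rw [card_image_of_injOn hinj] at hcard
  obtain ⟨B, hBA, ⟨e₀, he₀⟩, hBcard, p, -, hdet⟩ := h S _ A M hn hM hG havoid
    (fun e he => ⟨hAinj e he, mem_image_of_mem _ he⟩) hcard
  have : Nonempty (Fin (k + 1) → V) := ⟨e₀⟩
  choose! enum henum using fun E (hE : E ∈ B.image fun e => univ.image e) => mem_image.1 hE
  have herase : ∀ E ∈ B.image fun e => univ.image e,
      E.erase (enum E p) = ({p}ᶜ : Finset (Fin (k + 1))).image (enum E) := fun E hE => by
    nth_rw 1 [← (henum E hE).2]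
    rw [compl_singleton, image_erase (hAinj _ (hBA (henum E hE).1))]
  refine ⟨B.image fun e => univ.image e, image_subset_image hBA, ⟨_, mem_image_of_mem _ he₀⟩, ?_,
    fun E => enum E p, fun E hE => ?_, fun E hE E' hE' heq => ?_⟩
  · rwa [card_image_of_injOn (hinj.mono hBA)]
  · exact (henum E hE).2.subset (mem_image_of_mem _ (mem_univ p))
  · have hEB := (henum E hE).1
    have hEB' := (henum E' hE').1
    have heqOn := hAeq _ (hBA hEB) _ (hBA hEB') {p}ᶜ
      ((herase E hE).symm.trans (heq.trans (herase E' hE')))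
    rw [← (henum E hE).2, ← (henum E' hE').2,
      hdet _ hEB _ hEB' fun i hi => heqOn (by simpa using hi)]

theorem card_filter_union_le_one_add {β γ : Type*} [DecidableEq β] [DecidableEq γ] {A B : Finset β}
    {f : β → γ} (c : γ)
    (hA : Set.InjOn f A) : #{x ∈ A ∪ B | f x = c} ≤ 1 + #{x ∈ B | f x = c} := by
  rw [filter_union]
  refine (card_union_le _ _).trans (Nat.add_le_add_right (card_le_one.2 fun x hx y hy => ?_) _)
  obtain ⟨hxA, hxc⟩ := mem_filter.1 hx
  obtain ⟨hyA, hyc⟩ := mem_filter.1 hy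
  exact hA hxA hyA (hxc.trans hyc.symm)

theorem exists_bounded_fiber_subset (ℓ : ℕ) (hk : 1 ≤ k) (hw : 1 ≤ w) {θ κ : ℝ} (hθ : 0 < θ)
    (hκ : 0 < κ) :
    ∃ δ > 0, ∃ n₀ : ℕ, ∀ (S : Finset V) (G : Finset (Finset V)) (M : ℝ), n₀ ≤ #S →
      κ * (#S : ℝ) ^ k ≤ M → G ⊆ powersetCard (k + 1) S →
      AvoidsRichPairs (k + 1) ℓ w (δ * M / (#S : ℝ) ^ ℓ) G →
      ∃ G' ⊆ G, #G ≤ #G' + θ * M ∧ ∃ x : Finset V → V, (∀ E ∈ G', x E ∈ E) ∧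
        ∀ T, #{E ∈ G' | E.erase (x E) = T} * (δ * M) ≤ #G' := by
  obtain ⟨δ, hδ, n₀, h⟩ := exists_determined_subset (V := V) ℓ hk hw hθ hκ
  refine ⟨δ, hδ, max n₀ 1, fun S G M hn hM => ?_⟩
  have hM₀ : 0 ≤ M := hM.trans' (by positivity)
  have : Nonempty V := ⟨(card_pos.1 (le_of_max_le_right hn)).choose⟩
  induction G using Finset.strongInduction with
  | H G ih =>
    intro hG havoid
    by_cases hcard : θ * M ≤ #G
    swap
    · exact ⟨∅, empty_subset G, by simpa using (not_le.1 hcard).le,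
        fun _ => Classical.arbitrary V, by simp, by simp⟩
    obtain ⟨G₁, hG₁, hne, hcard₁, x₁, hx₁, hinj⟩ :=
      h S G M (le_of_max_le_left hn) hM hG havoid hcard
    obtain ⟨G₂, hG₂, hcard₂, x₂, hx₂, hfib⟩ := ih (G \ G₁) (sdiff_ssubset hG₁ hne)
      (sdiff_subset.trans hG) (havoid.mono sdiff_subset le_rfl)
    have hdisj : ∀ E ∈ G₂, E ∉ G₁ := fun E hE => (mem_sdiff.1 (hG₂ hE)).2
    have hunion : (#(G₁ ∪ G₂) : ℝ) = #G₁ + #G₂ := mod_cast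
      card_union_of_disjoint (disjoint_right.2 hdisj)
    have hsdiff : (#(G \ G₁) : ℝ) + #G₁ = #G := mod_cast card_sdiff_add_card_eq_card hG₁
    obtain ⟨x, hxx₁, hxx₂⟩ : ∃ x : Finset V → V, (∀ E ∈ G₁, x E = x₁ E) ∧ ∀ E ∈ G₂, x E = x₂ E :=
      ⟨fun E => if E ∈ G₁ then x₁ E else x₂ E, fun E hE => if_pos hE,
        fun E hE => if_neg (hdisj E hE)⟩
    refine ⟨G₁ ∪ G₂, union_subset hG₁ (hG₂.trans sdiff_subset), by linarith, x, fun E hE => ?_,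
      fun T => ?_⟩
    · rcases mem_union.1 hE with hE | hE
      · exact (hxx₁ E hE).symm ▸ hx₁ E hE
      · exact (hxx₂ E hE).symm ▸ hx₂ E hE
    · have hle := card_filter_union_le_one_add (f := fun E => E.erase (x E)) (B := G₂) T
        (hinj.congr fun E hE => by simp only [hxx₁ E hE])
      have hfib₂ : {E ∈ G₂ | E.erase (x E) = T} = {E ∈ G₂ | E.erase (x₂ E) = T} :=
        filter_congr fun E hE => by rw [hxx₂ E hE]
      rw [hfib₂] at hle
      have hle' := mul_le_mul_of_nonneg_right (Nat.cast_le (α := ℝ).2 hle)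
        (mul_nonneg hδ.le hM₀)
      push_cast at hle'
      linarith [hfib T]

theorem card_le_card_heavy_mul_add {β γ : Type*} [DecidableEq γ] {G : Finset β} {P : Finset γ}
    {f : β → γ} (hf : ∀ x ∈ G, f x ∈ P) (hσ : 1 ≤ σ) {m : ℝ}
    (hm : ∀ c, (#{x ∈ G | f x = c} : ℝ) ≤ m) :
    (#G : ℝ) ≤ #{c ∈ P | σ ≤ #{x ∈ G | f x = c}} * m + (σ - 1) * #P := by
  have hσ' : (1 : ℝ) ≤ σ := mod_cast hσ
  calc (#G : ℝ) = ∑ c ∈ P, (#{x ∈ G | f x = c} : ℝ) :=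
        mod_cast card_eq_sum_card_fiberwise hf
    _ ≤ ∑ c ∈ P, ((if σ ≤ #{x ∈ G | f x = c} then m else 0) + ((σ : ℝ) - 1)) := by
        refine sum_le_sum fun c _ => ?_
        split_ifs with hc
        · linarith [hm c]
        · have : (#{x ∈ G | f x = c} : ℝ) + 1 ≤ σ := mod_cast not_le.1 hc
          linarith
    _ = _ := by
        rw [sum_add_distrib, ← sum_filter, sum_const, sum_const, nsmul_eq_mul, nsmul_eq_mul]
        ring

theorem exists_injective_apexes {x : Finset V → V} {T : Finset V} (hx : ∀ E ∈ G, x E ∈ E)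
    (hT : σ ≤ #{E ∈ G | E.erase (x E) = T}) :
    ∃ a : Fin σ → V, Function.Injective a ∧ ∀ j, a j ∉ T ∧ insert (a j) T ∈ G := by
  have hcard : Fintype.card (Fin σ) ≤ Fintype.card ↥(G.filter fun E => E.erase (x E) = T) := by
    rwa [Fintype.card_fin, Fintype.card_coe]
  obtain ⟨E, hinj, hmem⟩ : ∃ E : Fin σ → Finset V, Function.Injective E ∧
      ∀ j, E j ∈ G.filter fun E => E.erase (x E) = T :=
    let ⟨e⟩ := Function.Embedding.nonempty_of_card_le hcard
    ⟨fun j => (e j).1, Subtype.val_injective.comp e.injective, fun j => (e j).2⟩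
  have hG (j) : E j ∈ G := (mem_filter.1 (hmem j)).1
  have herase (j) : (E j).erase (x (E j)) = T := (mem_filter.1 (hmem j)).2
  have hinsert (j) : insert (x (E j)) T = E j := by
    rw [← herase j, insert_erase (hx _ (hG j))]
  exact ⟨fun j => x (E j), fun i j hij => hinj ((hinsert i).symm.trans
      ((congrArg (insert · T) hij).trans (hinsert j))),
    fun j => ⟨herase j ▸ notMem_erase _ _, (hinsert j).symm ▸ hG j⟩⟩

-- A uniformly random `W` contains `Q b` and misses `P b` with probability `2 ^ -(p + q)`.
theorem exists_separating_subset {β X : Type*} (D : Finset β) {P Q : β → Finset X} {p q : ℕ}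
    (hP : ∀ b ∈ D, #(P b) = p) (hQ : ∀ b ∈ D, #(Q b) = q) (hPQ : ∀ b ∈ D, Disjoint (P b) (Q b)) :
    ∃ W, ∃ D' ⊆ D, #D ≤ 2 ^ (p + q) * #D' ∧ ∀ b ∈ D', Disjoint (P b) W ∧ Q b ⊆ W := by
  set Y := D.biUnion fun b => P b ∪ Q b
  have hPX : ∀ b ∈ D, P b ⊆ Y := fun b hb =>
    subset_union_left.trans (subset_biUnion_of_mem (fun b => P b ∪ Q b) hb)
  have hQX : ∀ b ∈ D, Q b ⊆ Y \ P b := fun b hb => subset_sdiff.2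
    ⟨subset_union_right.trans (subset_biUnion_of_mem (fun b => P b ∪ Q b) hb), (hPQ b hb).symm⟩
  have hIcc : ∀ b ∈ D, 2 ^ #Y = 2 ^ (p + q) * #{W ∈ Y.powerset | W ∈ Icc (Q b) (Y \ P b)} :=
    fun b hb => by
      have hfilter : {W ∈ Y.powerset | W ∈ Icc (Q b) (Y \ P b)} = Icc (Q b) (Y \ P b) := by
        rw [filter_mem_eq_inter, inter_eq_right]
        exact fun W hW => mem_powerset.2 ((mem_Icc.1 hW).2.trans sdiff_subset)
      have hle := card_le_card (hQX b hb)
      have hadd := card_sdiff_add_card_eq_card (hPX b hb)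
      rw [hfilter, card_Icc_finset (hQX b hb), ← pow_add]
      rw [hQ b hb] at hle ⊢
      rw [hP b hb] at hadd
      congr 1
      omega
  have hsum : ∑ _W ∈ Y.powerset, #D ≤
      ∑ W ∈ Y.powerset, 2 ^ (p + q) * #{b ∈ D | W ∈ Icc (Q b) (Y \ P b)} := by
    have hswap : ∑ W ∈ Y.powerset, #{b ∈ D | W ∈ Icc (Q b) (Y \ P b)} =
        ∑ b ∈ D, #{W ∈ Y.powerset | W ∈ Icc (Q b) (Y \ P b)} :=
      (sum_card_bipartiteAbove_eq_sum_card_bipartiteBelow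
        (fun b W => W ∈ Icc (Q b) (Y \ P b))).symm
    rw [← mul_sum, hswap, mul_sum, sum_const, card_powerset, smul_eq_mul, mul_comm,
      ← smul_eq_mul, ← sum_const]
    exact (sum_congr rfl hIcc).le
  obtain ⟨W, -, hW⟩ := exists_le_of_sum_le ⟨∅, empty_mem_powerset Y⟩ hsum
  refine ⟨W, _, filter_subset _ _, hW, fun b hb => ?_⟩
  obtain ⟨hQW, hWP⟩ := mem_Icc.1 (mem_filter.1 hb).2
  exact ⟨(subset_sdiff.1 hWP).2.symm, hQW⟩

theorem image_univ_cons {m : ℕ} (a : V) (u : Fin m → V) :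
    univ.image (Fin.cons a u : Fin (m + 1) → V) = insert a (univ.image u) :=
  coe_injective (by simp [Fin.range_cons])

theorem exists_isCone [Nonempty V] {D : Finset (Finset V)} (hD : ∀ T ∈ D, #T = k)
    (hapex : ∀ T ∈ D, ∃ a : Fin σ → V, Function.Injective a ∧ ∀ j, a j ∉ T ∧ insert (a j) T ∈ G) :
    ∃ (U : Finset (Fin k → V)) (apex : Fin σ → (Fin k → V) → V),
      IsCone G U apex ∧ #D ≤ 2 ^ (k + σ) * #U := by
  choose! a ha_inj ha using hapex
  obtain ⟨W, D', hD', hcard, hW⟩ := exists_separating_subset D (P := id)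
    (Q := fun T => univ.image (a T)) hD
    (fun T hT => by rw [card_image_of_injective _ (ha_inj T hT), card_univ, Fintype.card_fin])
    fun T hT => disjoint_right.2 fun v hv => by
      obtain ⟨j, -, rfl⟩ := mem_image.1 hv
      exact (ha T hT j).1
  obtain ⟨U, hU_inj, rfl, -⟩ := exists_enumerations fun T hT => hD T (hD' hT)
  have hmem : ∀ u ∈ U, univ.image u ∈ D := fun u hu => hD' (mem_image_of_mem _ hu)
  have happly (u : Fin k → V) (i) : u i ∈ univ.image u := mem_image_of_mem u (mem_univ i)
  refine ⟨U, fun j u => a (univ.image u) j, ⟨fun e he => ?_, fun u hu u' hu' j i heq => ?_,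
    fun u hu => ha_inj _ (hmem u hu)⟩, hcard.trans (Nat.mul_le_mul_left _ card_image_le)⟩
  · obtain ⟨j, u, hu, rfl⟩ := mem_coneTuples.1 he
    obtain ⟨hnotMem, hinsert⟩ := ha _ (hmem u hu) j
    refine ⟨Fin.cons_injective_iff.2 ⟨?_, hU_inj u hu⟩, (image_univ_cons _ u).symm ▸ hinsert⟩
    rintro ⟨i, hi⟩
    exact hnotMem (hi ▸ happly u i)
  · have happly_notMem := disjoint_left.1 (hW _ (mem_image_of_mem _ hu')).1 (happly u' i)
    exact happly_notMem (heq ▸ (hW _ (mem_image_of_mem _ hu)).2 (mem_image_of_mem _ (mem_univ j)))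

theorem eq_zero_of_isRich_image_cons {m : ℕ} {A : Finset (Fin m → V)} (f : (Fin m → V) → V)
    (hA : A.Nonempty) {x : Fin (m + 1)} (hw : 1 ≤ w)
    (hrich : ∀ J, x ∈ J → J ≠ univ →
      ∃ L > 0, IsRich w L (A.image fun u => (Fin.cons (f u) u : Fin (m + 1) → V)) J) :
    x = 0 := by
  by_contra hx
  obtain ⟨u, hu⟩ := hA
  obtain ⟨L, hL, hrich₀⟩ := hrich {0}ᶜ (by simpa using hx) (by simp [← coe_inj])
  obtain ⟨e, hmem, heq, hne⟩ := hrich₀.exists_ne hw hL (mem_image_of_mem _ hu) (i := 0) (by simp)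
  obtain ⟨u', -, rfl⟩ := mem_image.1 hmem
  have huu' : u' = u := funext fun i => by simpa using heq (x := i.succ) (by simp)
  exact hne (by rw [huu'])

theorem exists_isRich_cons_subset (hk : 1 ≤ k) (hℓ : ℓ ≤ k) (hw : 1 ≤ w) {θ : ℝ} (hθ : 0 < θ) :
    ∃ δ > 0, ∃ n₀ : ℕ, ∀ (S : Finset V) (F : Finset (Finset V)) (U : Finset (Fin k → V))
      (f : (Fin k → V) → V), n₀ ≤ #S → F ⊆ powersetCard (k + 1) S →
      AvoidsRichPairs (k + 1) ℓ w (δ * (#S : ℝ) ^ k / (#S : ℝ) ^ ℓ) F →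
      (∀ u ∈ U, IsEnumeration F (Fin.cons (f u) u : Fin (k + 1) → V)) →
      θ * (#S : ℝ) ^ k ≤ #U → ∃ A ⊆ U, A.Nonempty ∧ ∀ J, 0 ∈ J → #J ≤ ℓ →
        IsRich w (δ * (#S : ℝ) ^ k / (#S : ℝ) ^ ℓ)
          (A.image fun u => (Fin.cons (f u) u : Fin (k + 1) → V)) J := by
  obtain ⟨δ, hδ, n₀, h⟩ := AvoidsRichPairs.exists_type_two_subset (V := V) ℓ hk hw hθ one_pos
  refine ⟨δ, hδ, max n₀ 1, fun S F U f hn hF havoid hUF hU => ?_⟩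
  have hS : 1 ≤ #S := le_of_max_le_right hn
  rw [← card_image_of_injective U (f := fun u => (Fin.cons (f u) u : Fin (k + 1) → V))
    fun u u' huu' => (Fin.cons_inj.1 huu').2] at hU
  obtain ⟨B, hB, hBne, -, x, hrich, -⟩ := h S F _ _ (le_of_max_le_left hn) (one_mul _).le hF
    havoid (forall_mem_image.2 hUF) hU
  obtain ⟨A, hAU, rfl⟩ := subset_image_iff.1 hB
  have hA := image_nonempty.1 hBne
  obtain rfl := eq_zero_of_isRich_image_cons f hA hw fun J hx hJ =>
    ⟨_, by positivity, hrich J hx hJ⟩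
  refine ⟨A, hAU, hA, fun J h0 hJ => (hrich J h0 ?_).mono le_rfl
    (div_pow_le_div_pow_of_le (by positivity) hS hJ)⟩
  rintro rfl
  rw [card_univ, Fintype.card_fin] at hJ
  omega

-- Hereditary colouring with one colour for the richness of the base tuples and one for each apex.
theorem IsCone.exists_isRichCone_subset {U : Finset (Fin k → V)} {apex : Fin σ → (Fin k → V) → V}
    (h : IsCone F U apex)
    (hbase : ∀ r ⊆ U, #U ≤ (σ + 1) * #r →
      ∃ A ⊆ r, A.Nonempty ∧ ∀ J, #J ≤ ℓ → IsRich w L A J)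
    (hcons : ∀ j, ∀ r ⊆ U, #U ≤ (σ + 1) * #r → ∃ A ⊆ r, A.Nonempty ∧ ∀ J, 0 ∈ J → #J ≤ ℓ →
      IsRich w L (A.image fun u => (Fin.cons (apex j u) u : Fin (k + 1) → V)) J) :
    ∃ U' ⊆ U, IsRichCone ℓ w L F U' apex := by
  let good (A : Finset (Fin k → V)) (u : Fin k → V) (c : Option (Fin σ)) : Prop := c.elim
    (∀ J, #J ≤ ℓ → ∀ W, #W ≤ w → L ≤ #(extensions A J W u))
    fun j => ∀ J, 0 ∈ J → #J ≤ ℓ → ∀ W, #W ≤ w → L ≤ #(extensions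
      (A.image fun u => (Fin.cons (apex j u) u : Fin (k + 1) → V)) J W (Fin.cons (apex j u) u))
  have good_mono (A B u c) (hAB : A ⊆ B) (hA : good A u c) : good B u c := by
    rcases c with _ | j
    · exact fun J hJ W hW => (hA J hJ W hW).trans (mod_cast card_le_card (extensions_mono hAB W u))
    · exact fun J h0 hJ W hW => (hA J h0 hJ W hW).trans
        (mod_cast card_le_card (extensions_mono (image_subset_image hAB) W _))
  have exists_good (c) (r) (hr : r ⊆ U) (hcard : #U ≤ Fintype.card (Option (Fin σ)) * #r) :
      ∃ A ⊆ r, A.Nonempty ∧ ∀ u ∈ A, good A u c := by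
    rw [Fintype.card_option, Fintype.card_fin] at hcard
    rcases c with _ | j
    · obtain ⟨A, hAr, hA, hrich⟩ := hbase r hr hcard
      exact ⟨A, hAr, hA, fun u hu J hJ => hrich J hJ u hu⟩
    · obtain ⟨A, hAr, hA, hrich⟩ := hcons j r hr hcard
      exact ⟨A, hAr, hA, fun u hu J h0 hJ => hrich J h0 hJ _ (mem_image_of_mem _ hu)⟩
  obtain ⟨A, hAU, hA, hgood⟩ :=
    exists_forall_of_hereditary_of_card_le good_mono U exists_good
  exact ⟨A, hAU, { h.mono hAU with
    nonempty := hA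
    isRich := fun J hJ u hu => hgood u hu none J hJ
    isRich_cons := fun j J h0 hJ e he => by
      obtain ⟨u, hu, rfl⟩ := mem_image.1 he
      exact hgood u hu (some j) J h0 hJ }⟩

theorem exists_isRichCone_subset (σ : ℕ) (hk : 1 ≤ k) (hℓ : ℓ ≤ k) (hw : 1 ≤ w) {θ : ℝ}
    (hθ : 0 < θ) :
    ∃ δ > 0, ∃ n₀ : ℕ, ∀ (S : Finset V) (F : Finset (Finset V)) (U : Finset (Fin k → V))
      (apex : Fin σ → (Fin k → V) → V), n₀ ≤ #S → F ⊆ powersetCard (k + 1) S →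
      AvoidsRichPairs (k + 1) ℓ w (δ * (#S : ℝ) ^ k / (#S : ℝ) ^ ℓ) F →
      IsCone F U apex → (∀ u ∈ U, ∀ i, u i ∈ S) → θ * (#S : ℝ) ^ k ≤ #U →
      ∃ U' ⊆ U, IsRichCone ℓ w (δ * (#S : ℝ) ^ k / (#S : ℝ) ^ ℓ) F U' apex := by
  have hθ' : 0 < θ / (σ + 1) := by positivity
  obtain ⟨δ₁, hδ₁, n₁, h₁⟩ := exists_forall_isRich_subset (ι := Fin k) (V := V) w hθ'
  obtain ⟨δ₂, hδ₂, n₂, h₂⟩ := exists_isRich_cons_subset (V := V) hk hℓ hw hθ'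
  refine ⟨min δ₁ δ₂, lt_min hδ₁ hδ₂, max (max n₁ n₂) 1,
    fun S F U apex hn hF havoid hcone hUS hU => ?_⟩
  have hn₁₂ : max n₁ n₂ ≤ #S := le_of_max_le_left hn
  have hL {δ : ℝ} (hδ : min δ₁ δ₂ ≤ δ) {s : ℕ} (hs : s ≤ ℓ) :
      min δ₁ δ₂ * (#S : ℝ) ^ k / (#S : ℝ) ^ ℓ ≤ δ * (#S : ℝ) ^ k / (#S : ℝ) ^ s :=
    (div_pow_le_div_pow_of_le (by positivity) (le_of_max_le_right hn) hs).trans (by gcongr)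
  have hlarge {r : Finset (Fin k → V)} (hr : #U ≤ (σ + 1) * #r) :
      θ / (σ + 1) * (#S : ℝ) ^ k ≤ #r := by
    have : (#U : ℝ) ≤ (σ + 1) * #r := mod_cast hr
    rw [div_mul_eq_mul_div, div_le_iff₀ (by positivity)]
    linarith
  refine hcone.exists_isRichCone_subset (fun r hr hcard => ?_) fun j r hr hcard => ?_
  · obtain ⟨A, hAr, hA, hrich⟩ := h₁ S r (le_of_max_le_left hn₁₂) (fun u hu => hUS u (hr hu))
      (by simpa using hlarge hcard)
    refine ⟨A, hAr, hA, fun J hJ => (hrich J).mono le_rfl ?_⟩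
    simpa using hL (min_le_left δ₁ δ₂) hJ
  · obtain ⟨A, hAr, hA, hrich⟩ := h₂ S F r (apex j) (le_of_max_le_right hn₁₂) hF
      (havoid.mono subset_rfl (hL (min_le_right _ _) le_rfl))
      (fun u hu => hcone.isEnumeration _ (mem_coneTuples.2 ⟨j, u, hr hu, rfl⟩)) (hlarge hcard)
    exact ⟨A, hAr, hA, fun J h0 hJ =>
      (hrich J h0 hJ).mono le_rfl (hL (min_le_right _ _) le_rfl)⟩

theorem exists_mul_pow_le_choose (m : ℕ) :
    ∃ c > 0, ∃ n₀ : ℕ, ∀ n ≥ n₀, c * (n : ℝ) ^ m ≤ n.choose m := by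
  obtain ⟨C, hC, h⟩ := (isTheta_choose m).2.exists_pos
  obtain ⟨n₀, hn₀⟩ := eventually_atTop.1 h.bound
  refine ⟨C⁻¹, inv_pos.2 hC, n₀, fun n hn => ?_⟩
  rw [inv_mul_le_iff₀ hC]
  simpa using hn₀ n hn

theorem exists_isCone_of_card_fiber_le [Nonempty V] (hσ : 1 ≤ σ) {x : Finset V → V}
    (hG : G ⊆ powersetCard (k + 1) S) (hGF : G ⊆ F) (hx : ∀ E ∈ G, x E ∈ E) {m : ℝ}
    (hm : ∀ T, (#{E ∈ G | E.erase (x E) = T} : ℝ) ≤ m) :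
    (#G : ℝ) ≤ (#S).choose k * m ∧
      ∃ (U : Finset (Fin k → V)) (apex : Fin σ → (Fin k → V) → V), IsCone F U apex ∧
        (#G : ℝ) ≤ 2 ^ (k + σ) * #U * m + (σ - 1) * (#S).choose k := by
  have herase : ∀ E ∈ G, E.erase (x E) ∈ powersetCard k S := fun E hE => by
    obtain ⟨hES, hEk⟩ := mem_powersetCard.1 (hG hE)
    exact mem_powersetCard.2 ⟨(erase_subset _ _).trans hES, by rw [card_erase_of_mem (hx E hE), hEk,
      Nat.add_sub_cancel]⟩
  have hm₀ : 0 ≤ m := (Nat.cast_nonneg _).trans (hm ∅)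
  constructor
  · refine (card_le_card_heavy_mul_add herase le_rfl hm).trans ?_
    rw [Nat.cast_one, sub_self, zero_mul, add_zero, ← card_powersetCard]
    gcongr
    exact filter_subset _ _
  · obtain ⟨U, apex, hU, hcard⟩ := exists_isCone
      (D := {T ∈ powersetCard k S | σ ≤ #{E ∈ G | E.erase (x E) = T}}) (G := F) (σ := σ)
      (fun T hT => (mem_powersetCard.1 (mem_filter.1 hT).1).2) fun T hT => by
        obtain ⟨a, ha, haG⟩ := exists_injective_apexes hx (mem_filter.1 hT).2
        exact ⟨a, ha, fun j => ⟨(haG j).1, hGF (haG j).2⟩⟩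
    refine ⟨U, apex, hU, (card_le_card_heavy_mul_add herase hσ hm).trans ?_⟩
    rw [card_powersetCard]
    gcongr
    exact mod_cast hcard

theorem half_le_and_sub_half_mul_le {s ε C M g : ℝ} (hε : 0 < ε) (hs : ε ≤ s) (hM : 0 ≤ M)
    (hC : s * C ≤ M) (hg : M ≤ g + ε / (2 * s) * M) : M / 2 ≤ g ∧ (s - ε / 2) * C ≤ g := by
  have hs₀ : 0 < s := hε.trans_le hs
  have hθ : ε / (2 * s) ≤ 1 / 2 := by
    rw [div_le_div_iff₀ (by positivity) two_pos]
    linarith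
  refine ⟨by nlinarith, ?_⟩
  calc (s - ε / 2) * C = (1 - ε / (2 * s)) * (s * C) := by field_simp
    _ ≤ (1 - ε / (2 * s)) * M := by gcongr; linarith
    _ ≤ g := by linarith

-- Discarding a small part of `F` leaves bounded fibres of average size above `σ - 1`.
theorem AvoidsRichPairs.exists_isCone (ℓ : ℕ) (hk : 1 ≤ k) (hw : 1 ≤ w) (hσ : 1 ≤ σ) {ε : ℝ}
    (hε : 0 < ε) :
    ∃ δ > 0, ∃ θ > 0, ∃ n₀ : ℕ, ∀ (S : Finset V) (F : Finset (Finset V)), n₀ ≤ #S →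
      F ⊆ powersetCard (k + 1) S → (σ - 1 + ε) * ((#S).choose k : ℝ) ≤ #F →
      AvoidsRichPairs (k + 1) ℓ w (δ * #F / (#S : ℝ) ^ ℓ) F →
      δ * #F ≤ (#S : ℝ) ^ k ∧ ∃ (U : Finset (Fin k → V)) (apex : Fin σ → (Fin k → V) → V),
        IsCone F U apex ∧ θ * (#S : ℝ) ^ k ≤ #U := by
  have hσ' : (1 : ℝ) ≤ σ := mod_cast hσ
  obtain ⟨s, hs⟩ : ∃ s : ℝ, s = σ - 1 + ε := ⟨_, rfl⟩
  have hs₀ : 0 < s := by linarith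
  obtain ⟨c, hc, n₁, hchoose⟩ := exists_mul_pow_le_choose k
  obtain ⟨δ, hδ, n₂, hfiber⟩ := exists_bounded_fiber_subset (V := V) ℓ hk hw
    (θ := ε / (2 * s)) (κ := s * c) (by positivity) (by positivity)
  refine ⟨δ / 2, by positivity, ε / 2 * c * δ / 2 ^ (k + σ), by positivity,
    max (max n₁ n₂) (max 1 k), fun S F hn hF hcard havoid => ?_⟩
  simp only [max_le_iff] at hn
  rw [← hs] at hcard
  have : Nonempty V := ⟨(card_pos.1 hn.2.1).choose⟩
  have hC : c * (#S : ℝ) ^ k ≤ (#S).choose k := hchoose _ hn.1.1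
  have hC₀ : (0 : ℝ) < (#S).choose k := mod_cast Nat.choose_pos hn.2.2
  have hF₀ : (0 : ℝ) < #F := hcard.trans_lt' (by positivity)
  obtain ⟨G, hGF, hG, x, hx, hmul⟩ := hfiber S F #F hn.1.2
    (by rw [mul_assoc]; exact (mul_le_mul_of_nonneg_left hC hs₀.le).trans hcard) hF
    (havoid.mono subset_rfl (by gcongr; linarith))
  have hm (T) : (#{E ∈ G | E.erase (x E) = T} : ℝ) ≤ 1 / δ := by
    rw [le_div_iff₀ hδ]
    refine le_of_mul_le_mul_right ?_ hF₀
    have : (#G : ℝ) ≤ #F := mod_cast card_le_card hGF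
    linarith [hmul T]
  obtain ⟨hG_le, U, apex, hU, hG_le'⟩ :=
    exists_isCone_of_card_fiber_le hσ (hGF.trans hF) hGF hx hm
  obtain ⟨hG_half, hexcess⟩ :=
    half_le_and_sub_half_mul_le hε (by linarith) hF₀.le hcard hG
  have hchoose_le : ((#S).choose k : ℝ) ≤ (#S : ℝ) ^ k := mod_cast Nat.choose_le_pow _ _
  refine ⟨?_, U, apex, hU, ?_⟩
  · rw [mul_one_div, le_div_iff₀ hδ] at hG_le
    nlinarith
  · rw [div_mul_eq_mul_div, div_le_iff₀ (by positivity)]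
    rw [← sub_le_iff_le_add, mul_one_div, le_div_iff₀ hδ] at hG_le'
    have : ε / 2 * (c * (#S : ℝ) ^ k) * δ ≤ (#G - (σ - 1) * (#S).choose k) * δ := by
      gcongr
      nlinarith
    linarith

theorem exists_isRichCone_of_avoidsRichPairs (hk : 1 ≤ k) (hℓ : ℓ ≤ k) (hw : 1 ≤ w) (hσ : 1 ≤ σ)
    {ε : ℝ} (hε : 0 < ε) :
    ∃ δ > 0, ∃ n₀ : ℕ, ∀ (S : Finset V) (F : Finset (Finset V)), n₀ ≤ #S →
      F ⊆ powersetCard (k + 1) S → (σ - 1 + ε) * ((#S).choose k : ℝ) ≤ #F →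
      AvoidsRichPairs (k + 1) ℓ w (δ * #F / (#S : ℝ) ^ ℓ) F →
      ∃ (U : Finset (Fin k → V)) (apex : Fin σ → (Fin k → V) → V),
        IsRichCone ℓ w (δ * #F / (#S : ℝ) ^ ℓ) F U apex := by
  obtain ⟨δ₁, hδ₁, θ, hθ, n₁, hcone⟩ :=
    AvoidsRichPairs.exists_isCone (V := V) ℓ hk hw hσ hε
  obtain ⟨δ₂, hδ₂, n₂, hrich⟩ := exists_isRichCone_subset (V := V) σ hk hℓ hw hθ
  refine ⟨min δ₁ (δ₂ * δ₁), by positivity, max n₁ n₂, fun S F hn hF hcard havoid => ?_⟩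
  have hcard_le (hF_le : δ₁ * #F ≤ (#S : ℝ) ^ k) :
      min δ₁ (δ₂ * δ₁) * #F / (#S : ℝ) ^ ℓ ≤ δ₂ * (#S : ℝ) ^ k / (#S : ℝ) ^ ℓ := by
    refine div_le_div_of_nonneg_right ?_ (by positivity)
    calc min δ₁ (δ₂ * δ₁) * #F ≤ δ₂ * δ₁ * #F := by gcongr; exact min_le_right _ _
      _ = δ₂ * (δ₁ * #F) := mul_assoc _ _ _
      _ ≤ δ₂ * (#S : ℝ) ^ k := by gcongr
  obtain ⟨hF_le, U, apex, hU, hU_card⟩ := hcone S F (le_of_max_le_left hn) hF hcard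
    (havoid.mono subset_rfl (by gcongr; exact min_le_left _ _))
  obtain ⟨U', -, hU'⟩ := hrich S F U apex (le_of_max_le_right hn) hF
    (havoid.mono subset_rfl (hcard_le hF_le)) hU (fun u hu i =>
      (hU.isEnumeration _ (mem_coneTuples.2 ⟨⟨0, hσ⟩, u, hu, rfl⟩)).apply_mem hF i.succ) hU_card
  exact ⟨U', apex, { hU' with
    isRich := fun J hJ => (hU'.isRich J hJ).mono le_rfl (hcard_le hF_le)
    isRich_cons := fun j J h0 hJ => (hU'.isRich_cons j J h0 hJ).mono le_rfl (hcard_le hF_le) }⟩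

theorem exists_embedding_of_hasFewObstructions {α : Type} [DecidableEq α] {H : Finset (Finset α)}
    {C : Finset α} (hk : 1 ≤ k) (hℓ : ℓ ≤ k) (hH : IsHypertree H) (hunif : ∀ E ∈ H, #E = k + 1)
    (h2 : TwoContractible H) (hov : Overlapping ℓ H) (hC : IsCrosscut H C) {ε : ℝ} (hε : 0 < ε) :
    ∃ η > 0, ∃ n₀ : ℕ, ∀ (S : Finset V) (F : Finset (Finset V)) (z : ℝ)
      (Adm : Finset (Finset V) → Prop), n₀ ≤ #S → F ⊆ powersetCard (k + 1) S →
      (#C - 1 + ε) * ((#S).choose k : ℝ) ≤ #F → z < η * #F / (#S : ℝ) ^ ℓ →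
      HasFewObstructions F #H z Adm → ∃ φ : α → V, Set.InjOn φ (vertexSet H) ∧
        (∀ E ∈ H, E.image φ ∈ F) ∧ Adm (H.image fun E => E.image φ) := by
  obtain ⟨E, hE⟩ := hH.nonempty
  have hw : 1 ≤ #(vertexSet H) :=
    ((hunif E hE).symm ▸ Nat.le_add_left 1 k).trans
      (card_le_card (subset_vertexSet hE))
  have hC₁ : 1 ≤ #C := (hC E hE).symm.le.trans (card_le_card inter_subset_right)
  obtain ⟨δ, hδ, n₀, h⟩ := exists_isRichCone_of_avoidsRichPairs (V := V) hk hℓ hw hC₁ hε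
  refine ⟨δ / (k + 1) ^ (k + 1), by positivity, n₀, fun S F z Adm hn hF hcard hz hAdm => ?_⟩
  replace hz : z * (k + 1) ^ (k + 1) < δ * #F / (#S : ℝ) ^ ℓ := by
    rw [← lt_div_iff₀ (by positivity)]
    exact hz.trans_eq (by ring)
  by_cases havoid : AvoidsRichPairs (k + 1) ℓ #(vertexSet H) (δ * #F / (#S : ℝ) ^ ℓ) F
  · obtain ⟨U, apex, hU⟩ := h S F hn hF hcard havoid
    exact exists_embedding_of_isRichCone hAdm hH hunif hov hC rfl hU hz
  · simp only [AvoidsRichPairs, not_forall, not_not] at havoid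
    obtain ⟨A, hA, hAF, hrich⟩ := havoid
    exact exists_embedding_of_isRichOffPair hAdm hH (by simpa using hunif) h2 hov hA hAF hrich
      (by simpa using hz)

end Structure

/-! ### Graded families -/

section Graded

variable {α : Type} [DecidableEq α] {t : ℕ} {d : ℝ} {K : Finset (Finset α)} {S T : Finset α}

theorem sum_uDeg_insert_le (hK : ∀ C ∈ K, #C ≤ t) (S T : Finset α) :
    ∑ E ∈ T, uDeg K (insert E S) ≤ t * uDeg K S := by
  calc ∑ E ∈ T, uDeg K (insert E S)
      = ∑ C ∈ K, #{E ∈ T | insert E S ⊆ C} :=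
        sum_card_bipartiteAbove_eq_sum_card_bipartiteBelow fun E C => insert E S ⊆ C
    _ ≤ ∑ C ∈ K, if S ⊆ C then t else 0 := by
        refine sum_le_sum fun C hC => ?_
        split_ifs with hSC
        · refine (card_le_card fun E hE => ?_).trans (hK C hC)
          exact (mem_filter.1 hE).2 (mem_insert_self E S)
        · refine (card_eq_zero.2 (filter_eq_empty_iff.2 fun E _ hE => hSC ?_)).le
          exact (subset_insert E S).trans hE
    _ = t * uDeg K S := by rw [← sum_filter, sum_const, smul_eq_mul, mul_comm]; rfl

theorem uDeg_insert_le (K : Finset (Finset α)) (C S : Finset α) :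
    uDeg (insert C K) S ≤ uDeg K S + if S ⊆ C then 1 else 0 := by
  unfold uDeg
  rw [filter_insert]
  split_ifs
  · exact card_insert_le _ _
  · exact le_rfl

theorem Saturated.pow_le_two_mul_uDeg (h : Saturated t d K S) (hd : 1 ≤ d) :
    d ^ (t - #S) ≤ 2 * uDeg K S := by
  have hpow : 1 ≤ d ^ (t - #S) := one_le_pow₀ hd
  have hfloor : (1 : ℝ) ≤ ⌊d ^ (t - #S)⌋₊ := mod_cast (Nat.one_le_floor_iff _).2 hpow
  have hlt := Nat.lt_floor_add_one (d ^ (t - #S))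
  rw [h]
  linarith

theorem card_mul_pow_le_of_saturated_insert (hd : 1 ≤ d) (hK : ∀ C ∈ K, #C ≤ t)
    (hT : ∀ E ∈ T, E ∉ S ∧ Saturated t d K (insert E S)) :
    #T * d ^ (t - (#S + 1)) ≤ 2 * t * uDeg K S := by
  calc #T * d ^ (t - (#S + 1)) = ∑ _E ∈ T, d ^ (t - (#S + 1)) := by rw [sum_const, nsmul_eq_mul]
    _ ≤ ∑ E ∈ T, 2 * (uDeg K (insert E S) : ℝ) := sum_le_sum fun E hE => by
        rw [← card_insert_of_notMem (hT E hE).1]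
        exact (hT E hE).2.pow_le_two_mul_uDeg hd
    _ = 2 * (∑ E ∈ T, uDeg K (insert E S) : ℕ) := by rw [← mul_sum, Nat.cast_sum]
    _ ≤ 2 * (t * uDeg K S : ℕ) := by gcongr; exact sum_uDeg_insert_le hK S T
    _ = 2 * t * uDeg K S := by push_cast; ring

theorem card_le_of_saturated_insert (h : Graded t d K) (hd : 1 ≤ d)
    (hK : ∀ C ∈ K, #C ≤ t) (hS : S.Nonempty) (hSt : #S < t)
    (hT : ∀ E ∈ T, E ∉ S ∧ Saturated t d K (insert E S)) : #T ≤ 2 * t * d := by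
  refine le_of_mul_le_mul_right ?_ (show 0 < d ^ (t - (#S + 1)) by positivity)
  calc #T * d ^ (t - (#S + 1)) ≤ 2 * t * uDeg K S := card_mul_pow_le_of_saturated_insert hd hK hT
    _ ≤ 2 * t * d ^ (t - #S) := by gcongr; exact h S hS.card_pos hSt.le
    _ = 2 * t * d * d ^ (t - (#S + 1)) := by
        rw [mul_assoc _ d, ← pow_succ', show t - (#S + 1) + 1 = t - #S by omega]

theorem Admissible.exists_saturated_insert (hS : Admissible t d K S) {E : α}
    (hE : ¬ Saturated t d K {E}) (hES : ¬ Admissible t d K (insert E S)) :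
    ∃ S₀ ⊆ S, S₀.Nonempty ∧ E ∉ S₀ ∧ Saturated t d K (insert E S₀) := by
  simp only [Admissible, not_forall, not_not] at hES
  obtain ⟨S', hS', hne, hsat⟩ := hES
  have hmem : E ∈ S' := by
    by_contra hmem
    exact hS S' ((subset_insert_iff_of_notMem hmem).1 hS') hne hsat
  refine ⟨S'.erase E, subset_insert_iff.1 hS', nonempty_iff_ne_empty.2 fun hempty => hE ?_,
    notMem_erase E S', by rwa [insert_erase hmem]⟩
  rwa [← insert_erase hmem, hempty, insert_empty] at hsat

theorem card_le_of_not_admissible_insert (h : Graded t d K) (hd : 1 ≤ d)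
    (hK : ∀ C ∈ K, #C ≤ t) (hS : Admissible t d K S) (hSt : #S < t)
    (hT : ∀ E ∈ T, ¬ Saturated t d K {E} ∧ ¬ Admissible t d K (insert E S)) :
    #T ≤ 2 ^ t * (2 * t * d) := by
  have hsub : T ⊆ ({S₀ ∈ S.powerset | S₀.Nonempty}).biUnion fun S₀ =>
      {E ∈ T | E ∉ S₀ ∧ Saturated t d K (insert E S₀)} := fun E hE => by
    obtain ⟨S₀, hS₀, hne, hmem, hsat⟩ := hS.exists_saturated_insert (hT E hE).1 (hT E hE).2
    exact mem_biUnion.2 ⟨S₀, mem_filter.2 ⟨mem_powerset.2 hS₀, hne⟩, mem_filter.2 ⟨hE, hmem, hsat⟩⟩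
  calc (#T : ℝ) ≤ ∑ S₀ ∈ S.powerset with S₀.Nonempty,
        (#{E ∈ T | E ∉ S₀ ∧ Saturated t d K (insert E S₀)} : ℝ) :=
        mod_cast (card_le_card hsub).trans card_biUnion_le
    _ ≤ #{S₀ ∈ S.powerset | S₀.Nonempty} • (2 * t * d) := sum_le_card_nsmul _ _ _ fun S₀ hS₀ => by
        obtain ⟨hS₀S, hne⟩ := mem_filter.1 hS₀
        exact card_le_of_saturated_insert h hd hK hne
          ((card_le_card (mem_powerset.1 hS₀S)).trans_lt hSt) fun E hE => (mem_filter.1 hE).2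
    _ ≤ 2 ^ t * (2 * t * d) := by
        rw [nsmul_eq_mul]
        gcongr
        exact mod_cast (card_filter_le _ _).trans
          ((card_powerset S).le.trans (Nat.pow_le_pow_right two_pos hSt.le))

theorem hasFewObstructions_of_graded {V : Type} [DecidableEq V] {K : Finset (Finset (Finset V))}
    {F : Finset (Finset V)} (h : Graded t d K) (hd : 1 ≤ d) (hK : ∀ C ∈ K, #C ≤ t)
    (hF : ∀ E ∈ F, ¬ Saturated t d K {E}) :
    HasFewObstructions F t (2 ^ t * (2 * t * d)) (Admissible t d K) where
  singleton E hE S hS hne := by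
    rw [(subset_singleton_iff.1 hS).resolve_left hne.ne_empty]
    exact hF E hE
  card_le S hS _ hSt := card_le_of_not_admissible_insert h hd hK hS hSt fun E hE =>
    ⟨hF E (mem_filter.1 hE).1, (mem_filter.1 hE).2⟩

theorem graded_insert_of_admissible (h : Graded t d K) {C : Finset α} (hC : Admissible t d K C) :
    Graded t d (insert C K) := fun S hS hSt => by
  refine (Nat.cast_le.2 (uDeg_insert_le K C S)).trans ?_
  have hle := h S hS hSt
  split_ifs with hSC
  · have hne : uDeg K S ≠ ⌊d ^ (t - #S)⌋₊ := hC S hSC (card_pos.1 hS)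
    have hpow : 0 ≤ d ^ (t - #S) := (Nat.cast_nonneg _).trans hle
    exact (Nat.le_floor_iff hpow).1 (Nat.lt_of_le_of_ne (Nat.le_floor hle) hne)
  · rwa [add_zero]

theorem exists_graded_subset_forall_not_admissible {A : Finset (Finset α)} (ht : 1 ≤ t)
    (hd : 0 ≤ d) (hA : ∀ C ∈ A, #C = t) :
    ∃ K ⊆ A, Graded t d K ∧ ∀ C ∈ A, ¬ Admissible t d K C := by
  obtain ⟨K, hK⟩ := (A.powerset.filter (Graded t d)).exists_maximal
    ⟨∅, mem_filter.2 ⟨empty_mem_powerset A, fun S _ _ => by simpa [uDeg] using pow_nonneg hd _⟩⟩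
  obtain ⟨hKA, hgr⟩ := mem_filter.1 hK.1
  rw [mem_powerset] at hKA
  refine ⟨K, hKA, hgr, fun C hC hadm => hadm C subset_rfl ?_ ?_⟩
  · rw [← card_pos, hA C hC]
    exact ht
  · have hmem : C ∈ K := hK.2 (mem_filter.2 ⟨mem_powerset.2 (insert_subset hC hKA),
      graded_insert_of_admissible hgr hadm⟩) (subset_insert C K) (mem_insert_self C K)
    have hone : K.filter (C ⊆ ·) = {C} := by
      ext B
      simp only [mem_filter, mem_singleton]
      refine ⟨fun ⟨hB, hCB⟩ => ?_, by rintro rfl; exact ⟨hmem, subset_rfl⟩⟩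
      exact (eq_of_subset_of_card_le hCB (by rw [hA C hC, hA B (hKA hB)])).symm
    simp [Saturated, uDeg, hone, hA C hC]

theorem uDeg_mul_le_card_of_graded (h : Graded t d K) (hd : 0 < d) {m : ℝ} (hm : 0 ≤ m)
    (hK : m * d ^ (t - 1) ≤ #K) (hS : 1 ≤ #S) (hSt : #S ≤ t) :
    uDeg K S * (m * d ^ (#S - 1)) ≤ #K := by
  calc uDeg K S * (m * d ^ (#S - 1)) ≤ d ^ (t - #S) * (m * d ^ (#S - 1)) := by
        gcongr
        exact h S hS hSt
    _ = m * d ^ (t - 1) := by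
        rw [mul_left_comm, ← pow_add, show t - #S + (#S - 1) = t - 1 by omega]
    _ ≤ #K := hK

end Graded

/-! ### Balanced supersaturation -/

section Copies

variable {α : Type} [DecidableEq α] {k ℓ : ℕ} {H : Finset (Finset α)} {F : Finset (Finset ℕ)}

theorem mem_copies {A : Finset (Finset ℕ)} : A ∈ copies H F ↔ A ⊆ F ∧ IsCopyOf H A := by
  rw [copies, mem_filter, mem_powerset]

theorem IsCopyOf.card_eq {A : Finset (Finset ℕ)} (h : IsCopyOf H A) : #A = #H := by
  obtain ⟨φ, hφ, rfl⟩ := h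
  refine card_image_of_injOn fun E hE E' hE' heq => ?_
  have hsub : ∀ E ∈ H, (E : Set α) ⊆ vertexSet H := fun E hE => coe_subset.2 (subset_vertexSet hE)
  refine coe_injective ((hφ.image_eq_image_iff (hsub E hE) (hsub E' hE')).1 ?_)
  exact_mod_cast congrArg (fun B : Finset ℕ => (B : Set ℕ)) heq

theorem TwoContractible.overlapping_sub_two (h2 : TwoContractible H) (hunif : ∀ E ∈ H, #E = k) :
    Overlapping (k - 2) H := fun E hE P hP hne => by
  have hdisj : Disjoint (E ∩ P) {v ∈ E | vdeg H v = 1} := disjoint_left.2 fun v hv hdeg =>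
    vdeg_ne_one hE hP hne (mem_inter.1 hv).1 (mem_inter.1 hv).2 (mem_filter.1 hdeg).2
  have hcard := card_le_card (union_subset inter_subset_left (filter_subset _ _) :
    E ∩ P ∪ {v ∈ E | vdeg H v = 1} ⊆ E)
  rw [card_union_of_disjoint hdisj, hunif E hE] at hcard
  have := h2 E hE
  omega

theorem card_saturated_singleton_le {t : ℕ} {d : ℝ} {K : Finset (Finset α)} {T : Finset α}
    {x m : ℝ} (hd : 1 ≤ d) (ht : 1 ≤ t) (hK : ∀ C ∈ K, #C ≤ t)
    (hcard : #K ≤ x / (2 * t) * m * d ^ (t - 1)) :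
    #{E ∈ T | Saturated t d K {E}} ≤ x * m := by
  refine le_of_mul_le_mul_right ?_ (show 0 < d ^ (t - 1) by positivity)
  calc #{E ∈ T | Saturated t d K {E}} * d ^ (t - 1)
      = #{E ∈ T | Saturated t d K {E}} * d ^ (t - (#(∅ : Finset α) + 1)) := by simp
    _ ≤ 2 * t * uDeg K ∅ := card_mul_pow_le_of_saturated_insert hd hK fun E hE =>
        ⟨notMem_empty E, (insert_empty (a := E)).symm ▸ (mem_filter.1 hE).2⟩
    _ = 2 * t * #K := by simp [uDeg]
    _ ≤ 2 * t * (x / (2 * t) * m * d ^ (t - 1)) := by gcongr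
    _ = x * m * d ^ (t - 1) := by field_simp

theorem exists_admissible_copy_of_graded (hk : 1 ≤ k) (hℓ : ℓ ≤ k) (hH : IsHypertree H)
    (hunif : ∀ E ∈ H, #E = k + 1) (h2 : TwoContractible H) (hov : Overlapping ℓ H) {C : Finset α}
    (hC : IsCrosscut H C) {ε s : ℝ} (hε : 0 < ε) (hs : s = #C - 1 + ε) (hεs : ε ≤ s) :
    ∃ η > 0, ∃ n₀ : ℕ, ∀ (S : Finset ℕ) (F : Finset (Finset ℕ)) (d : ℝ)
      (K : Finset (Finset (Finset ℕ))), n₀ ≤ #S → F ⊆ powersetCard (k + 1) S →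
      s * ((#S).choose k : ℝ) ≤ #F → 1 ≤ d → d ≤ η * #F / (#S : ℝ) ^ ℓ →
      Graded #H d K → (∀ A ∈ K, #A ≤ #H) →
      #{E ∈ F | Saturated #H d K {E}} ≤ ε / (2 * s) * #F →
      ∃ A ∈ copies H F, Admissible #H d K A := by
  have ht : 1 ≤ #H := card_pos.2 hH.nonempty
  obtain ⟨η, hη, n₀, h⟩ := exists_embedding_of_hasFewObstructions (V := ℕ) hk hℓ hH hunif h2 hov hC
    (half_pos hε)
  refine ⟨η / (2 ^ #H * (2 * #H) * 4), by positivity, n₀,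
    fun S F d K hn hF hcard hd₁ hd hgr hK hsat => ?_⟩
  set F₁ := {E ∈ F | ¬ Saturated #H d K {E}} with hF₁
  have hsplit : (#F : ℝ) = #{E ∈ F | Saturated #H d K {E}} + #F₁ :=
    mod_cast (card_filter_add_card_filter_not (s := F) (Saturated #H d K {·})).symm
  obtain ⟨hhalf, hdense⟩ := half_le_and_sub_half_mul_le hε hεs (Nat.cast_nonneg #F) hcard
    (show (#F : ℝ) ≤ #F₁ + ε / (2 * s) * #F by linarith)
  have hz : 2 ^ #H * (2 * #H * d) < η * #F₁ / (#S : ℝ) ^ ℓ := by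
    calc 2 ^ #H * (2 * #H * d) < 2 * (2 ^ #H * (2 * #H * d)) :=
          lt_two_mul_self (by positivity)
      _ ≤ 2 * (2 ^ #H * (2 * #H * (η / (2 ^ #H * (2 * #H) * 4) * #F / (#S : ℝ) ^ ℓ))) := by gcongr
      _ = η * (#F / 2) / (#S : ℝ) ^ ℓ := by field_simp; norm_num
      _ ≤ η * #F₁ / (#S : ℝ) ^ ℓ := by gcongr
  obtain ⟨φ, hφ, hφF, hadm⟩ := h S F₁ _ (Admissible #H d K) hn ((filter_subset _ _).trans hF)
    (by convert hdense using 2; rw [hs]; ring) hz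
    (hasFewObstructions_of_graded hgr hd₁ hK fun E hE => (mem_filter.1 hE).2)
  refine ⟨_, mem_copies.2 ⟨?_, φ, hφ, rfl⟩, hadm⟩
  exact image_subset_iff.2 fun E hE => (mem_filter.1 (hφF E hE)).1

theorem exists_graded_copies (hk : 1 ≤ k) (hℓ : ℓ ≤ k) (hH : IsHypertree H)
    (hunif : ∀ E ∈ H, #E = k + 1) (h2 : TwoContractible H) (hov : Overlapping ℓ H) {C : Finset α}
    (hC : IsCrosscut H C) {ε : ℝ} (hε : 0 < ε) :
    ∃ η > 0, ∃ c > 0, ∃ n₀ : ℕ, ∀ (S : Finset ℕ) (F : Finset (Finset ℕ)) (d : ℝ), n₀ ≤ #S →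
      F ⊆ powersetCard (k + 1) S → (#C - 1 + ε) * ((#S).choose k : ℝ) ≤ #F → 1 ≤ d →
      d ≤ η * #F / (#S : ℝ) ^ ℓ →
      ∃ K ⊆ copies H F, Graded #H d K ∧ c * #F * d ^ (#H - 1) ≤ #K := by
  obtain ⟨E, hE⟩ := hH.nonempty
  have ht : 1 ≤ #H := card_pos.2 ⟨E, hE⟩
  have hC₁ : (1 : ℝ) ≤ #C := mod_cast (hC E hE).symm.le.trans (card_le_card inter_subset_right)
  obtain ⟨s, hs⟩ : ∃ s : ℝ, s = #C - 1 + ε := ⟨_, rfl⟩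
  have hεs : ε ≤ s := by linarith
  have hs₀ : 0 < s := hε.trans_le hεs
  obtain ⟨η, hη, n₀, h⟩ := exists_admissible_copy_of_graded hk hℓ hH hunif h2 hov hC hε hs hεs
  refine ⟨η, hη, ε / (2 * s) / (2 * #H), by positivity, n₀, fun S F d hn hF hcard hd₁ hd => ?_⟩
  obtain ⟨K, hKF, hgr, hmax⟩ := exists_graded_subset_forall_not_admissible ht
    (zero_le_one.trans hd₁) fun A hA => (mem_copies.1 hA).2.card_eq
  refine ⟨K, hKF, hgr, ?_⟩
  by_contra! hsmall
  have hK : ∀ A ∈ K, #A ≤ #H := fun A hA => (mem_copies.1 (hKF hA)).2.card_eq.le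
  obtain ⟨A, hA, hadm⟩ := h S F d K hn hF (hs ▸ hcard) hd₁ hd hgr hK
    (card_saturated_singleton_le hd₁ ht hK hsmall.le)
  exact hmax A hA hadm

theorem exists_graded_copies_of_isKGraphOn (hk : 1 ≤ k) (hℓ : ℓ < k) (hH : IsKTree (k + 1) H)
    (h2 : TwoContractible H) (hov : Overlapping ℓ H) {C : Finset α} (hC : IsCrosscut H C) {ε : ℝ}
    (hε : 0 < ε) :
    ∃ δ > 0, δ ≤ 1 ∧ ∃ c > 0, ∃ n₀ : ℕ, ∀ n ≥ n₀, ∀ (F : Finset (Finset ℕ)) (a : ℝ),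
      IsKGraphOn (k + 1) n F → (#F : ℝ) = a * n.choose k → #C - 1 + ε ≤ a →
      ∃ K ⊆ copies H F, Graded #H (δ * (a * (n : ℝ) ^ (k - ℓ))) K ∧
        c * #F * (δ * (a * (n : ℝ) ^ (k - ℓ))) ^ (#H - 1) ≤ #K := by
  obtain ⟨E, hE⟩ := hH.1.nonempty
  have hC₁ : (1 : ℝ) ≤ #C := mod_cast (hC E hE).symm.le.trans (card_le_card inter_subset_right)
  obtain ⟨η, hη, c, hc, n₁, hcopies⟩ := exists_graded_copies hk hℓ.le hH.1 hH.2 h2 hov hC hε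
  obtain ⟨r, hr, n₂, hchoose⟩ := exists_mul_pow_le_choose k
  have hδ : 0 < min 1 (η * r) := by positivity
  refine ⟨min 1 (η * r), hδ, min_le_left _ _, c, hc,
    max (max n₁ n₂) (max 1 ⌈1 / (min 1 (η * r) * ε)⌉₊), fun n hn F a hF hcard haC => ?_⟩
  simp only [ge_iff_le, max_le_iff, Nat.ceil_le] at hn
  obtain ⟨⟨hn₁, hn₂⟩, hn_pos, hn_large⟩ := hn
  have hn_pos' : (1 : ℝ) ≤ n := mod_cast hn_pos
  have ha : ε ≤ a := by linarith
  have ha₀ : 0 ≤ a := hε.le.trans ha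
  have hvtx : #(vtx n) = n := by simp [vtx]
  refine hcopies (vtx n) F _ (hvtx.symm ▸ hn₁) (fun E hE => mem_powersetCard.2 (hF E hE)) ?_ ?_ ?_
  · rw [hvtx, hcard]
    gcongr
  · calc 1 ≤ min 1 (η * r) * (ε * n) := by
          rwa [div_le_iff₀' (by positivity), mul_assoc] at hn_large
      _ ≤ min 1 (η * r) * (a * (n : ℝ) ^ (k - ℓ)) := by
          gcongr
          exact le_self_pow₀ hn_pos' (Nat.sub_ne_zero_of_lt hℓ)
  · rw [hvtx, le_div_iff₀ (by positivity), hcard]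
    calc min 1 (η * r) * (a * (n : ℝ) ^ (k - ℓ)) * (n : ℝ) ^ ℓ
        = min 1 (η * r) * (a * (n : ℝ) ^ k) := by rw [← pow_sub_mul_pow (n : ℝ) hℓ.le]; ring
      _ ≤ η * r * (a * (n : ℝ) ^ k) := by
          gcongr
          exact min_le_right _ _
      _ = η * (a * (r * (n : ℝ) ^ k)) := by ring
      _ ≤ η * (a * n.choose k) := by gcongr; exact hchoose n hn₂

theorem uDeg_le_of_graded {t : ℕ} {d δ D c m : ℝ} {K : Finset (Finset α)} {S : Finset α}
    (h : Graded t d K) (hδ : 0 < δ) (hδ₁ : δ ≤ 1) (hD : 0 < D) (hd : δ * D ≤ d) (hc : 0 < c)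
    (hm : 0 < m) (hK : c * m * d ^ (t - 1) ≤ #K) (hS : 1 ≤ #S) (hSt : #S ≤ t) :
    uDeg K S ≤ 1 / (c * δ ^ t) * (1 / D) ^ (#S - 1) * #K / m := by
  have hpow : δ ^ t * D ^ (#S - 1) ≤ d ^ (#S - 1) :=
    calc δ ^ t * D ^ (#S - 1) ≤ δ ^ (#S - 1) * D ^ (#S - 1) := by
          gcongr ?_ * _
          exact pow_le_pow_of_le_one hδ.le hδ₁ (by omega)
      _ = (δ * D) ^ (#S - 1) := (mul_pow ..).symm
      _ ≤ d ^ (#S - 1) := by gcongr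
  calc (uDeg K S : ℝ) ≤ #K / (c * m * (δ ^ t * D ^ (#S - 1))) := by
        rw [le_div_iff₀ (by positivity)]
        refine le_trans ?_
          (uDeg_mul_le_card_of_graded h ((mul_pos hδ hD).trans_le hd) (by positivity) hK hS hSt)
        gcongr
    _ = 1 / (c * δ ^ t) * (1 / D) ^ (#S - 1) * #K / m := by
        rw [one_div_pow]
        field_simp

end Copies

theorem stmt_16_general {α : Type} [DecidableEq α] (k ℓ t : ℕ) (ε : ℝ) (hε : 0 < ε)
    (H : Finset (Finset α)) (hH : IsKTree k H) (h2 : TwoContractible H)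
    (hov : Overlapping ℓ H) (hte : H.card = t) (C : Finset α) (hC : IsCrosscut H C) :
    ∃ c c' : ℝ, 0 < c ∧ 0 < c' ∧ ∃ n₀ : ℕ, ∀ n ≥ n₀,
      ∀ F : Finset (Finset ℕ), ∀ a : ℝ, IsKGraphOn k n F →
      (F.card : ℝ) = a * (n.choose (k - 1) : ℝ) → (C.card : ℝ) - 1 + ε ≤ a →
      ∃ K : Finset (Finset (Finset ℕ)),
        (∀ A ∈ K, A ⊆ F ∧ IsCopyOf H A) ∧
        c' * a * (n : ℝ) ^ (k - 1) * (a * (n : ℝ) ^ (k - ℓ - 1)) ^ (t - 1)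
          ≤ (K.card : ℝ) ∧
        ∀ b : ℕ, 1 ≤ b → b ≤ t → ∀ S : Finset (Finset ℕ), S.card = b →
          (∃ A ∈ K, S ⊆ A) →
          (uDeg K S : ℝ) ≤
            c * (1 / (a * (n : ℝ) ^ (k - ℓ - 1))) ^ (b - 1) * (K.card : ℝ) / (F.card : ℝ) := by
  subst hte
  obtain ⟨E, hE⟩ := hH.1.nonempty
  have hk : 2 ≤ k := (h2 E hE).trans ((card_filter_le _ _).trans (hH.2 E hE).le)
  have hC₁ : (1 : ℝ) ≤ #C := mod_cast (hC E hE).symm.le.trans (card_le_card inter_subset_right)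
  obtain ⟨k, rfl⟩ : ∃ j, k = j + 1 := ⟨k - 1, by omega⟩
  have hov' : Overlapping (min ℓ (k - 1)) H := fun E hE P hP hne =>
    le_min (hov E hE P hP hne) (h2.overlapping_sub_two hH.2 E hE P hP hne)
  obtain ⟨δ, hδ, hδ₁, c, hc, n₁, hcopies⟩ :=
    exists_graded_copies_of_isKGraphOn (by omega) (by omega) hH h2 hov' hC hε
  obtain ⟨r, hr, n₂, hchoose⟩ := exists_mul_pow_le_choose k
  refine ⟨1 / (c * δ ^ #H), c * r * δ ^ (#H - 1), by positivity, by positivity,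
    max (max n₁ n₂) 1, fun n hn F a hF hcard ha => ?_⟩
  simp only [ge_iff_le, max_le_iff] at hn
  have hn_pos : (1 : ℝ) ≤ n := mod_cast hn.2
  have ha₀ : 0 < a := by linarith
  have hrn : r * (n : ℝ) ^ k ≤ n.choose k := hchoose n hn.1.2
  obtain ⟨K, hKF, hgr, hK⟩ := hcopies n hn.1.1 F a hF hcard ha
  have hd : δ * (a * (n : ℝ) ^ (k + 1 - ℓ - 1)) ≤ δ * (a * (n : ℝ) ^ (k - min ℓ (k - 1))) := by
    gcongr _ * (_ * ?_)
    exact pow_le_pow_right₀ hn_pos (by omega)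
  have hF₀ : r * (a * (n : ℝ) ^ k) ≤ #F := by
    rw [hcard, mul_left_comm]
    exact mul_le_mul_of_nonneg_left hrn ha₀.le
  refine ⟨K, fun A hA => mem_copies.1 (hKF hA), ?_, ?_⟩
  · calc c * r * δ ^ (#H - 1) * a * (n : ℝ) ^ k * (a * (n : ℝ) ^ (k + 1 - ℓ - 1)) ^ (#H - 1)
        = c * (r * (a * (n : ℝ) ^ k)) * (δ * (a * (n : ℝ) ^ (k + 1 - ℓ - 1))) ^ (#H - 1) := by
          rw [mul_pow]; ring
      _ ≤ c * #F * (δ * (a * (n : ℝ) ^ (k - min ℓ (k - 1)))) ^ (#H - 1) := by gcongr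
      _ ≤ #K := hK
  · rintro _ hS hSt S rfl -
    exact uDeg_le_of_graded hgr hδ hδ₁ (by positivity) hd hc (hF₀.trans_lt' (by positivity)) hK
      hS hSt

/-- optimal balanced supersaturation: for a 2-contractible `ℓ`-overlapping
`k`-tree `H` with `t` edges and cross-cut number `σ`, and `ε > 0`, any `k`-graph with
`a·C(n,k−1)` edges, `a ≥ σ−1+ε`, contains a collection `K` of copies of `H` with
`|K| ≥ c'·a·n^{k−1}·(a·n^{k−ℓ−1})^{t−1}` and `Δ_b(K) ≤ c·τ^{b−1}·|K|/|F|` for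
`1 ≤ b ≤ t`, where `τ = 1/(a·n^{k−ℓ−1})`. -/
theorem stmt_16 {α : Type} [DecidableEq α] (k ℓ t σ : ℕ) (hk : 4 ≤ k)
    (ε : ℝ) (hε : 0 < ε)
    (H : Finset (Finset α)) (hH : IsKTree k H) (h2 : TwoContractible H)
    (hov : Overlapping ℓ H) (hte : H.card = t) (hσ : IsCrosscutNumber H σ) :
    ∃ c c' : ℝ, 0 < c ∧ 0 < c' ∧ ∃ n₀ : ℕ, ∀ n ≥ n₀,
      ∀ F : Finset (Finset ℕ), ∀ a : ℝ, IsKGraphOn k n F →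
      (F.card : ℝ) = a * (n.choose (k - 1) : ℝ) → (σ : ℝ) - 1 + ε ≤ a →
      ∃ K : Finset (Finset (Finset ℕ)),
        (∀ A ∈ K, A ⊆ F ∧ IsCopyOf H A) ∧
        c' * a * (n : ℝ) ^ (k - 1) * (a * (n : ℝ) ^ (k - ℓ - 1)) ^ (t - 1)
          ≤ (K.card : ℝ) ∧
        ∀ b : ℕ, 1 ≤ b → b ≤ t → ∀ S : Finset (Finset ℕ), S.card = b →
          (∃ A ∈ K, S ⊆ A) →
          (uDeg K S : ℝ) ≤
            c * (1 / (a * (n : ℝ) ^ (k - ℓ - 1))) ^ (b - 1) * (K.card : ℝ) / (F.card : ℝ) := by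
  obtain ⟨C, hC, rfl⟩ := hσ.1
  exact stmt_16_general k ℓ t ε hε H hH h2 hov hte C hC
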